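/- arXiv:1711.07159 — 3 statements merged into one kernel-verified Lean document; each statement's English description precedes it below -/
import Mathlib

section
/- Let A be a finite-dimensional self-injective algebra over a field k, M a finite-dimensional faithful right A-module, and B = End_A(M). Then M is both projective and injective as a left B-module. -/
/-!
Let `R` be left Artinian and left self-injective, and let `M` be finitely generated and faithful
with endomorphism ring `B`.

*Projectivity.* `R` embeds in a finite power of `M`, hence is a retract of it, and `Hom_R(-, M)`
turns this into a presentation of `M = Hom_R(R, M)` as a retract of a finite power of `B`.

*Injectivity.* If `M` is a cogenerator, then a finite system of equations `b m = g b`, with `g` a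
`B`-linear map on a left ideal of `B`, has a solution: a functional separating `(g b)` from the
image of `M` would be a relation among the `b` that `g` violates. The descending chain condition
on `M` removes the finiteness, which leaves Baer's criterion.

*Cogeneration.* Since `M` is faithful it suffices that `R` is a cogenerator, that is, that every
simple module embeds in `R`. Self-injectivity makes the left annihilator of a primitive ideal `P`
nonzero. A simple left ideal `S` in it has a primitive annihilator, and `P ↦ Ann S` is injective
by the double annihilator property. As there are finitely many primitive ideals, it is
surjective, and a simple module is determined by its annihilator.
-/

universe u v w

section LinearMaps

variable {R : Type*} [Ring R] {M N X Y : Type*} [AddCommGroup M] [Module R M]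
  [AddCommGroup N] [Module R N] [AddCommGroup X] [Module R X] [AddCommGroup Y] [Module R Y]

theorem map_eq_sum_map_single {ι : Type*} [Fintype ι] [DecidableEq ι] (f : (ι → M) →ₗ[R] N)
    (x : ι → M) : f x = ∑ i, f (Pi.single i (x i)) := by
  rw [← map_sum, Finset.univ_sum_single]

theorem exists_comp_single_ne_zero {ι : Type*} [Finite ι] [DecidableEq ι] {M : ι → Type*}
    [∀ i, AddCommGroup (M i)] [∀ i, Module R (M i)] {f : (∀ i, M i) →ₗ[R] N} (hf : f ≠ 0) :
    ∃ i, f ∘ₗ LinearMap.single R M i ≠ 0 := by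
  contrapose! hf
  exact LinearMap.pi_ext' fun i ↦ by rw [hf i, LinearMap.zero_comp]

theorem exists_comp_rangeRestrict_eq {φ : X →ₗ[R] Y} {ψ : X →ₗ[R] N}
    (h : LinearMap.ker φ ≤ LinearMap.ker ψ) :
    ∃ ψ' : LinearMap.range φ →ₗ[R] N, ψ' ∘ₗ φ.rangeRestrict = ψ :=
  ⟨(LinearMap.ker φ).liftQ ψ h ∘ₗ φ.quotKerEquivRange.symm.toLinearMap, LinearMap.ext fun x ↦
    congrArg _ (φ.quotKerEquivRange_symm_apply_image x (φ.mem_range_self x))⟩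

theorem exists_finset_ker_pi_le [IsArtinian R X] {ι : Type*} (f : ι → X →ₗ[R] M) :
    ∃ F : Finset ι, ∀ i, LinearMap.ker (LinearMap.pi fun j : F ↦ f j) ≤ LinearMap.ker (f i) := by
  obtain ⟨F, hF⟩ := Finset.exists_inf_le fun i ↦ LinearMap.ker (f i)
  refine ⟨F, fun i ↦ le_trans ?_ (hF i)⟩
  simp only [LinearMap.ker_pi, Finset.inf_eq_iInf, iInf_subtype, le_refl]

theorem exists_ker_toSpanSingleton_le_annihilator (R M : Type*) [Ring R] [IsArtinianRing R]
    [AddCommGroup M] [Module R M] : ∃ (F : Finset M) (v : F → M),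
      LinearMap.ker (LinearMap.toSpanSingleton R (F → M) v) ≤ Module.annihilator R M := by
  obtain ⟨F, hF⟩ := exists_finset_ker_pi_le (LinearMap.toSpanSingleton R M)
  exact ⟨F, Subtype.val, fun r hr ↦ Module.mem_annihilator.2 fun m ↦ hF m hr⟩

theorem exists_comp_eq_of_ker_le_ker {R : Type u} [Ring R] {Q : Type v} [AddCommGroup Q]
    [Module R Q] [Small.{v} R] [Module.Injective R Q] {X Y : Type*} [AddCommGroup X] [Module R X]
    [AddCommGroup Y] [Module R Y] {φ : X →ₗ[R] Y} {ψ : X →ₗ[R] Q}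
    (h : LinearMap.ker φ ≤ LinearMap.ker ψ) : ∃ g : Y →ₗ[R] Q, g ∘ₗ φ = ψ := by
  obtain ⟨ψ', hψ'⟩ := exists_comp_rangeRestrict_eq h
  obtain ⟨g, hg⟩ := Module.Injective.extension_property R Q _ _ (LinearMap.range φ).subtype
    (Submodule.subtype_injective _) ψ'
  exact ⟨g, by rw [← hψ', ← hg]; rfl⟩

theorem exists_linearMap_ne_zero_of_annihilator_smul [IsArtinianRing R] [IsSemisimpleModule R M]
    {x : N} (hx : x ≠ 0) (h : ∀ r ∈ Module.annihilator R M, r • x = 0) :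
    ∃ f : M →ₗ[R] N, f ≠ 0 := by
  classical
  obtain ⟨F, v, hv⟩ := exists_ker_toSpanSingleton_le_annihilator R M
  obtain ⟨ψ, hψ⟩ := exists_comp_rangeRestrict_eq (ψ := LinearMap.toSpanSingleton R N x)
    fun r hr ↦ h r (hv hr)
  obtain ⟨g, hg⟩ := IsSemisimpleModule.extension_property _ (Submodule.subtype_injective _) ψ
  have hgv : g v = x := by
    have := LinearMap.congr_fun hψ 1
    rw [← hg] at this
    simpa using this
  have hg_ne : g ≠ 0 := fun hg_zero ↦ hx (by rw [← hgv, hg_zero, LinearMap.zero_apply])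
  obtain ⟨i, hi⟩ := exists_comp_single_ne_zero hg_ne
  exact ⟨_, hi⟩

end LinearMaps

section PrimitiveIdeals

/-- The left primitive ideals of `R`, i.e. the annihilators of the simple left `R`-modules. Only
the quotients `R ⧸ m` are used, which keeps the definition in the universe of `R`. -/
def primitiveIdeals (R : Type*) [Ring R] : Set (Ideal R) :=
  {P | ∃ m : Ideal R, m.IsMaximal ∧ Module.annihilator R (R ⧸ m) = P}

variable {R : Type*} [Ring R]

theorem isSimpleModule_quotient (m : Ideal R) [m.IsMaximal] : IsSimpleModule R (R ⧸ m) :=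
  isSimpleModule_iff_isCoatom.2 (Ideal.isMaximal_def.1 inferInstance)

variable (R) in
theorem annihilator_mem_primitiveIdeals (T : Type*) [AddCommGroup T] [Module R T]
    [IsSimpleModule R T] : Module.annihilator R T ∈ primitiveIdeals R := by
  obtain ⟨m, hm, ⟨e⟩⟩ := isSimpleModule_iff_quot_maximal.1 ‹IsSimpleModule R T›
  exact ⟨m, hm, e.symm.annihilator_eq⟩

theorem isTwoSided_of_mem_primitiveIdeals {P : Ideal R} (hP : P ∈ primitiveIdeals R) :
    P.IsTwoSided := by
  obtain ⟨m, -, rfl⟩ := hP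
  infer_instance

theorem ne_top_of_mem_primitiveIdeals {P : Ideal R} (hP : P ∈ primitiveIdeals R) : P ≠ ⊤ := by
  obtain ⟨m, hm, rfl⟩ := hP
  have := isSimpleModule_quotient m
  have := IsSimpleModule.nontrivial R (R ⧸ m)
  rwa [Ne, Module.annihilator_eq_top_iff, not_subsingleton_iff_nontrivial]

variable [IsArtinianRing R]

theorem annihilator_eq_of_annihilator_smul {S T : Type*} [AddCommGroup S] [Module R S]
    [IsSimpleModule R S] [AddCommGroup T] [Module R T] [IsSimpleModule R T] {t : T} (ht : t ≠ 0)
    (h : ∀ r ∈ Module.annihilator R S, r • t = 0) :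
    Module.annihilator R S = Module.annihilator R T := by
  obtain ⟨f, hf⟩ := exists_linearMap_ne_zero_of_annihilator_smul ht h
  exact (LinearEquiv.ofBijective f (LinearMap.bijective_of_ne_zero hf)).annihilator_eq

theorem sup_eq_top_of_mem_primitiveIdeals {P Q : Ideal R} (hP : P ∈ primitiveIdeals R)
    (hQ : Q ∈ primitiveIdeals R) (hPQ : P ≠ Q) : P ⊔ Q = ⊤ := by
  by_contra hne
  obtain ⟨n, hn, hle⟩ := Ideal.exists_le_maximal _ hne
  have eq_annihilator {P : Ideal R} (hP : P ∈ primitiveIdeals R) (hPn : P ≤ n) :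
      P = Module.annihilator R (R ⧸ n) := by
    obtain ⟨m, hm, rfl⟩ := hP
    have := isSimpleModule_quotient m
    have := isSimpleModule_quotient n
    have one_ne_zero : Submodule.Quotient.mk (p := n) 1 ≠ 0 :=
      (Submodule.Quotient.mk_eq_zero n).not.2 (n.ne_top_iff_one.1 hn.ne_top)
    refine annihilator_eq_of_annihilator_smul one_ne_zero fun r hr ↦ ?_
    rw [← Submodule.Quotient.mk_smul, smul_eq_mul, mul_one, Submodule.Quotient.mk_eq_zero]
    exact hPn hr
  exact hPQ ((eq_annihilator hP (le_sup_left.trans hle)).trans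
    (eq_annihilator hQ (le_sup_right.trans hle)).symm)

theorem finite_primitiveIdeals : (primitiveIdeals R).Finite := by
  obtain ⟨F, hF⟩ := Finset.exists_inf_le
    fun m : {m : Ideal R // m.IsMaximal} ↦ Module.annihilator R (R ⧸ m.1)
  refine (F.finite_toSet.image fun m ↦ Module.annihilator R (R ⧸ m.1)).subset ?_
  rintro _ ⟨m, hm, rfl⟩
  have (n : {m : Ideal R // m.IsMaximal}) : IsSimpleModule R (R ⧸ n.1) :=
    have := n.2
    isSimpleModule_quotient n.1
  have := isSimpleModule_quotient m
  have := IsSimpleModule.nontrivial R (R ⧸ m)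
  obtain ⟨t, ht⟩ := exists_ne (0 : R ⧸ m)
  have annihilator_pi_le :
      Module.annihilator R (∀ n : F, R ⧸ n.1.1) ≤ Module.annihilator R (R ⧸ m) := by
    refine le_trans ?_ (hF ⟨m, hm⟩)
    simp only [Module.annihilator_pi, Finset.inf_eq_iInf, iInf_subtype, le_refl]
  obtain ⟨f, hf⟩ := exists_linearMap_ne_zero_of_annihilator_smul
    (M := ∀ n : F, R ⧸ n.1.1) ht fun r hr ↦ Module.mem_annihilator.1 (annihilator_pi_le hr) t
  obtain ⟨n, hn⟩ := exists_comp_single_ne_zero hf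
  exact ⟨n, n.2, (LinearEquiv.ofBijective _ (LinearMap.bijective_of_ne_zero hn)).annihilator_eq⟩

end PrimitiveIdeals

section SelfInjective

variable {R : Type*} [Ring R] [IsArtinianRing R] [Module.Injective R R]

/-- The double annihilator property; `I * ⊤` is the right ideal generated by `I`. -/
theorem mem_mul_top_of_annihilator_smul {I : Ideal R} {x : R}
    (h : ∀ t ∈ I.annihilator, t • x = 0) : x ∈ I * ⊤ := by
  classical
  obtain ⟨F, hF⟩ := exists_finset_ker_pi_le fun a : I ↦ LinearMap.toSpanSingleton R R (a : R)
  obtain ⟨g, hg⟩ := exists_comp_eq_of_ker_le_ker (ψ := LinearMap.toSpanSingleton R R x)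
    fun t ht ↦ h t (Submodule.mem_annihilator.2 fun a ha ↦ hF ⟨a, ha⟩ ht)
  have hgx : g (fun a : F ↦ (a.1 : R)) = x := by
    rw [← LinearMap.toSpanSingleton_apply_one R R x, ← hg, LinearMap.comp_apply]
    congr 1
    ext
    simp
  rw [← hgx, LinearMap.pi_apply_eq_sum_univ]
  exact Submodule.sum_mem _ fun a _ ↦ Ideal.mul_mem_mul a.1.2 Submodule.mem_top

theorem annihilator_ne_bot {P : Ideal R} [P.IsTwoSided] (hP : P ≠ ⊤) : P.annihilator ≠ ⊥ := by
  intro hbot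
  have one_mem : (1 : R) ∈ P * ⊤ := mem_mul_top_of_annihilator_smul fun t ht ↦ by
    rw [hbot, Submodule.mem_bot] at ht
    rw [ht, zero_smul]
  exact P.ne_top_iff_one.1 hP (Ideal.mul_le_left one_mem)

/-- The assignment `P ↦ Ann S`, with `S` a simple left ideal such that `S * P = 0`, is the Nakayama
permutation of the finite set of primitive ideals. -/
theorem exists_simple_ideal_annihilator_eq {Q : Ideal R} (hQ : Q ∈ primitiveIdeals R) :
    ∃ S : Ideal R, IsSimpleModule R S ∧ S.annihilator = Q := by
  have exists_simple_le (P : primitiveIdeals R) :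
      ∃ S : Ideal R, IsSimpleModule R S ∧ S ≤ P.1.annihilator := by
    have := isTwoSided_of_mem_primitiveIdeals P.2
    have hne := annihilator_ne_bot (ne_top_of_mem_primitiveIdeals P.2)
    obtain ⟨S, hS, hSP⟩ := (eq_bot_or_exists_atom_le P.1.annihilator).resolve_left hne
    exact ⟨S, isSimpleModule_iff_isAtom.2 hS, hSP⟩
  choose S hS hSP using exists_simple_le
  let ν (P : primitiveIdeals R) : primitiveIdeals R :=
    ⟨(S P).annihilator, annihilator_mem_primitiveIdeals R (S P)⟩
  have ν_injective : Function.Injective ν := by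
    intro P P' hν
    by_contra hne
    have S_le : S P ≤ P'.1.annihilator := fun x hx ↦
      Ideal.mul_le_left (Ideal.mul_mono_left (hSP P') (mem_mul_top_of_annihilator_smul fun t ht ↦
        Submodule.mem_annihilator.1 ((congrArg Subtype.val hν).ge ht) x hx))
    have S_eq_bot : S P ≤ ⊥ := by
      have hsup := sup_eq_top_of_mem_primitiveIdeals P.2 P'.2 (Subtype.coe_injective.ne hne)
      calc S P ≤ P.1.annihilator ⊓ P'.1.annihilator := le_inf (hSP P) S_le
        _ = (⊤ : Ideal R).annihilator := by rw [← Submodule.annihilator_sup, hsup]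
        _ = ⊥ := by rw [Submodule.annihilator_top, Module.annihilator_eq_bot.2 inferInstance]
    exact (isSimpleModule_iff_isAtom.1 (hS P)).1 (le_bot_iff.1 S_eq_bot)
  have : Finite (primitiveIdeals R) := finite_primitiveIdeals
  obtain ⟨P, hP⟩ := Finite.surjective_of_injective ν_injective ⟨Q, hQ⟩
  exact ⟨S P, hS P, congrArg Subtype.val hP⟩

theorem exists_linearMap_self_ne_zero (T : Type*) [AddCommGroup T] [Module R T]
    [IsSimpleModule R T] : ∃ f : T →ₗ[R] R, f ≠ 0 := by
  obtain ⟨S, hS, hST⟩ := exists_simple_ideal_annihilator_eq (annihilator_mem_primitiveIdeals R T)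
  have := IsSimpleModule.nontrivial R S
  obtain ⟨s, hs⟩ := exists_ne (0 : S)
  obtain ⟨f, hf⟩ := exists_linearMap_ne_zero_of_annihilator_smul (M := T) hs fun r hr ↦
    Module.mem_annihilator.1 (hST.ge hr) s
  obtain ⟨t, ht⟩ := DFunLike.ne_iff.1 hf
  exact ⟨S.subtype ∘ₗ f, DFunLike.ne_iff.2 ⟨t, Subtype.coe_injective.ne ht⟩⟩

end SelfInjective

section Generators

/-- `M` is a generator of the category of `R`-modules, expressed by its trace ideal being `R`. -/
def IsGenerator (R M : Type*) [Ring R] [AddCommGroup M] [Module R M] : Prop :=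
  ⨆ f : M →ₗ[R] R, LinearMap.range f = ⊤

/-- `M` is a cogenerator of the category of `R`-modules in the universe `w`: homomorphisms to `M`
separate points. -/
def IsCogenerator (R : Type u) (M : Type v) [Ring R] [AddCommGroup M] [Module R M] : Prop :=
  ∀ (N : Type w) [AddCommGroup N] [Module R N] (x : N), x ≠ 0 → ∃ f : N →ₗ[R] M, f x ≠ 0

variable {R : Type u} [Ring R] {M : Type v} [AddCommGroup M] [Module R M]

theorem IsGenerator.of_faithfulSMul [IsArtinianRing R] [Module.Injective R R] [FaithfulSMul R M] :
    IsGenerator R M := by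
  classical
  obtain ⟨F, v, hv⟩ := exists_ker_toSpanSingleton_le_annihilator R M
  rw [Module.annihilator_eq_bot.2 inferInstance] at hv
  obtain ⟨p, hp⟩ := exists_comp_eq_of_ker_le_ker (ψ := LinearMap.id) (hv.trans bot_le)
  have hpv : p v = 1 := by simpa using LinearMap.congr_fun hp 1
  rw [IsGenerator, Ideal.eq_top_iff_one, ← hpv, map_eq_sum_map_single p v]
  exact Submodule.sum_mem _ fun m _ ↦
    Submodule.mem_iSup_of_mem (p ∘ₗ LinearMap.single R (fun _ ↦ M) m) ⟨v m, rfl⟩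

theorem IsCogenerator.self [IsArtinianRing R] [Module.Injective R R] :
    IsCogenerator.{u, u, w} R R := by
  intro N _ _ x hx
  have ker_ne_top : LinearMap.ker (LinearMap.toSpanSingleton R N x) ≠ ⊤ :=
    (Ideal.ne_top_iff_one _).2 (by simpa using hx)
  obtain ⟨m, hm, hle⟩ := Ideal.exists_le_maximal _ ker_ne_top
  have := isSimpleModule_quotient m
  obtain ⟨f, hf⟩ := exists_linearMap_self_ne_zero (R := R) (R ⧸ m)
  obtain ⟨g, hg⟩ := exists_comp_eq_of_ker_le_ker (ψ := f ∘ₗ m.mkQ)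
    (hle.trans (m.ker_mkQ.ge.trans (LinearMap.ker_le_ker_comp _ _)))
  refine ⟨g, fun hgx ↦ hf ?_⟩
  ext
  simpa [hgx] using (LinearMap.congr_fun hg 1).symm

theorem IsCogenerator.of_faithfulSMul [FaithfulSMul R M] (hR : IsCogenerator.{u, u, w} R R) :
    IsCogenerator.{u, v, w} R M := by
  intro N _ _ x hx
  obtain ⟨f, hf⟩ := hR N x hx
  obtain ⟨m, hm⟩ : ∃ m : M, f x • m ≠ 0 := by
    by_contra! hzero
    exact hf (FaithfulSMul.eq_of_smul_eq_smul (α := M) fun m ↦ by rw [hzero, zero_smul])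
  exact ⟨LinearMap.toSpanSingleton R M m ∘ₗ f, hm⟩

theorem IsCogenerator.mem_of_forall_apply_eq_zero (hM : IsCogenerator.{u, v, w} R M) {N : Type w}
    [AddCommGroup N] [Module R N] {L : Submodule R N} {x : N}
    (h : ∀ f : N →ₗ[R] M, L ≤ LinearMap.ker f → f x = 0) : x ∈ L := by
  by_contra hx
  obtain ⟨f, hf⟩ := hM (N ⧸ L) (L.mkQ x) (by simpa using hx)
  exact hf (h (f ∘ₗ L.mkQ) (L.ker_mkQ.ge.trans (LinearMap.ker_le_ker_comp _ _)))

end Generators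

section EndomorphismRing

variable {R : Type u} [Ring R] {M : Type v} [AddCommGroup M] [Module R M]

theorem IsGenerator.projective_end (hM : IsGenerator R M) :
    Module.Projective (Module.End R M) M := by
  have one_mem : (1 : R) ∈ ⨆ f : M →ₗ[R] R, LinearMap.range f := hM ▸ Submodule.mem_top
  obtain ⟨F, hF⟩ := Submodule.mem_iSup_iff_exists_finset.1 one_mem
  obtain ⟨r, hr⟩ := (Submodule.mem_iSup_finset_iff_exists_sum _ _).1 hF
  choose m hm using fun f ↦ (r f).2
  have sum_eq_one : ∑ f : F, f.1 (m f) = 1 := by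
    rw [← hr, ← F.sum_coe_sort]
    exact Finset.sum_congr rfl fun f _ ↦ hm f
  let toPi : M →ₗ[Module.End R M] (F → Module.End R M) :=
    { toFun x f := LinearMap.toSpanSingleton R M x ∘ₗ f.1
      map_add' x y := by ext; simp
      map_smul' b x := by ext; simp }
  let eval : (F → Module.End R M) →ₗ[Module.End R M] M :=
    ∑ f : F, LinearMap.toSpanSingleton (Module.End R M) M (m f) ∘ₗ LinearMap.proj f
  refine Module.Projective.of_split toPi eval (LinearMap.ext fun x ↦ ?_)
  calc eval (toPi x) = ∑ f : F, f.1 (m f) • x := by simp [eval, toPi]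
    _ = x := by rw [← Finset.sum_smul, sum_eq_one, one_smul]

theorem IsCogenerator.exists_forall_mem_finset_apply_eq (hM : IsCogenerator.{u, v, v} R M)
    {I : Ideal (Module.End R M)} (g : I →ₗ[Module.End R M] M) (F : Finset I) :
    ∃ m : M, ∀ b ∈ F, b.1 m = g b := by
  classical
  let φ : M →ₗ[R] (F → M) := LinearMap.pi fun b ↦ b.1.1
  suffices (fun b : F ↦ g b) ∈ LinearMap.range φ by
    obtain ⟨m, hm⟩ := this
    exact ⟨m, fun b hb ↦ congrFun hm ⟨b, hb⟩⟩
  refine hM.mem_of_forall_apply_eq_zero fun f hf ↦ ?_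
  let c (b : F) : Module.End R M := f ∘ₗ LinearMap.single R (fun _ ↦ M) b
  have relation : ∑ b : F, c b • b.1 = 0 := by
    ext m
    simpa [c, φ, map_eq_sum_map_single f (φ m)] using hf ⟨m, rfl⟩
  calc f (fun b ↦ g b) = ∑ b : F, c b • g b := map_eq_sum_map_single f _
    _ = g (∑ b : F, c b • b.1) := by simp only [map_sum, map_smul]
    _ = 0 := by rw [relation, map_zero]

theorem IsCogenerator.injective_end [IsArtinian R M] (hM : IsCogenerator.{u, v, v} R M) :
    Module.Injective (Module.End R M) M := by
  classical
  refine Module.Baer.injective fun I g ↦ ?_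
  obtain ⟨F, hF⟩ := exists_finset_ker_pi_le fun b : I ↦ (b.1 : M →ₗ[R] M)
  obtain ⟨m, hm⟩ := hM.exists_forall_mem_finset_apply_eq g F
  refine ⟨LinearMap.toSpanSingleton _ M m, fun b hb ↦ ?_⟩
  obtain ⟨m', hm'⟩ := hM.exists_forall_mem_finset_apply_eq g (insert ⟨b, hb⟩ F)
  have sub_mem_ker : m - m' ∈ LinearMap.ker b :=
    hF ⟨b, hb⟩ <| LinearMap.mem_ker.2 <| funext fun c ↦ by
      simp [hm c c.2, hm' c (Finset.mem_insert_of_mem c.2)]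
  calc b m = b m' := LinearMap.sub_mem_ker_iff.1 sub_mem_ker
    _ = g ⟨b, hb⟩ := hm' _ (Finset.mem_insert_self _ _)

end EndomorphismRing

theorem injective_mulOpposite_self (A : Type*) [Ring A] [Module.Injective Aᵐᵒᵖ A] :
    Module.Injective Aᵐᵒᵖ Aᵐᵒᵖ :=
  let e : A ≃ₗ[Aᵐᵒᵖ] Aᵐᵒᵖ := { MulOpposite.opAddEquiv with map_smul' := fun _ _ ↦ rfl }
  ((Module.Baer.of_injective inferInstance).of_equiv e).injective

theorem stmt_5_general (R : Type*) [Ring R] [IsArtinianRing R] [Module.Injective R R]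
    (M : Type*) [AddCommGroup M] [Module R M] [Module.Finite R M] [FaithfulSMul R M] :
    Module.Projective (Module.End R M) M ∧ Module.Injective (Module.End R M) M :=
  ⟨IsGenerator.of_faithfulSMul.projective_end, IsCogenerator.self.of_faithfulSMul.injective_end⟩

/-- Let `A` be a finite-dimensional self-injective algebra over a field `k`,
`M` a finite-dimensional faithful right `A`-module, and `B = End_A(M)` acting on `M` on the
left by evaluation.  Then `M` is both projective and injective as a left `B`-module. -/
theorem stmt_5 (k : Type*) [Field k] (A : Type*) [Ring A] [Algebra k A]
    [FiniteDimensional k A] [Module.Injective Aᵐᵒᵖ A]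
    (M : Type*) [AddCommGroup M] [Module k M] [Module Aᵐᵒᵖ M]
    [IsScalarTower k Aᵐᵒᵖ M] [FiniteDimensional k M] [FaithfulSMul Aᵐᵒᵖ M] :
    Module.Projective (Module.End Aᵐᵒᵖ M) M ∧ Module.Injective (Module.End Aᵐᵒᵖ M) M := by
  have : FiniteDimensional k Aᵐᵒᵖ := Module.Finite.equiv (MulOpposite.opLinearEquiv k)
  have : IsArtinianRing Aᵐᵒᵖ := IsArtinianRing.of_finite k Aᵐᵒᵖ
  have : Module.Finite Aᵐᵒᵖ M := Module.Finite.of_restrictScalars_finite k Aᵐᵒᵖ M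
  have := injective_mulOpposite_self A
  exact stmt_5_general Aᵐᵒᵖ M
end

section
/- Let A be a finite-dimensional self-injective algebra, M a finite-dimensional faithful right A-module, B = End_A(M), and let ^∨M = Hom_B(_B M, B) be the left dual. Then (A, B) satisfies the double centralizer property on ^∨M: End_A(^∨M) ≅ B and End_B(^∨M) ≅ A. -/
open MulOpposite

/-!
Write `R` for `Aᵐᵒᵖ`, so that `M` is a left `R`-module. Since `R` is Artinian and self-injective
and `M` is faithful, `1 = ∑ ψᵢ(mᵢ)` for some `ψᵢ : M → R`, i.e. `M` is a generator. Hence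
`φ ↦ (x ↦ (y ↦ φ(y) x))` identifies `Hom_R(M, R)` with `^∨M`, compatibly with both actions. An
endomorphism `T` of `Hom_R(M, R)` commuting with `B` is then multiplication by `∑ (T ψᵢ)(mᵢ)`. One
commuting with `R` is the transpose of an element of `B`, because `M` is reflexive.

Reflexivity requires that functionals separate the points of every `R`-module. If all functionals
vanish at `x`, then the largest two-sided ideal `I` inside `ann(x)` has right annihilator `r(I) = 0`
by injectivity, so it remains to see that `r(I) = 0` forces `I = R`. Injectivity gives
`r(l(I)) = I`, where `l` is the left annihilator, and shows that `I ↦ r(r(I))` preserves binary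
intersections; so this is a surjective endomorphism of a meet-semilattice with descending chain
condition, and only the top element is sent to the top.
-/

namespace DoubleCentralizer

theorem eq_top_of_map_eq_top_of_surjective {α : Type*} [SemilatticeInf α] [OrderTop α]
    [WellFoundedLT α] (g : InfTopHom α α) (hg : Function.Surjective g) {x : α} (hx : g x = ⊤) :
    x = ⊤ := by
  have iterate_inf (n : ℕ) (y z : α) : g^[n] (y ⊓ z) = g^[n] y ⊓ g^[n] z := by
    induction n generalizing y z with
    | zero => rfl
    | succ n ih => simp only [Function.iterate_succ_apply, map_inf, ih]
  have iterate_top (n : ℕ) : g^[n] ⊤ = ⊤ := Function.iterate_fixed (map_top g) n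
  -- Let `m` be the least element that some iterate sends to `⊤`, say `g^[n] m = ⊤`. A preimage `y`
  -- of `x` under `g^[n]` is also sent to `⊤` by an iterate, so `m ≤ y` and `⊤ = g^[n] m ≤ x`.
  obtain ⟨m, ⟨n, hmn⟩, hmin⟩ :=
    exists_minimal_of_wellFoundedLT (fun y ↦ ∃ n, g^[n] y = ⊤) ⟨⊤, 0, rfl⟩
  have le_of_iterate_eq_top {y : α} {l : ℕ} (hy : g^[l] y = ⊤) : m ≤ y := by
    refine (hmin ⟨n + l, ?_⟩ inf_le_left).trans inf_le_right
    rw [iterate_inf, Function.iterate_add_apply g n l y, hy, iterate_top, add_comm,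
      Function.iterate_add_apply, hmn, iterate_top, inf_top_eq]
  obtain ⟨y, rfl⟩ := hg.iterate n x
  have hmy : m ≤ y := le_of_iterate_eq_top (l := n + 1) (by rwa [Function.iterate_succ_apply'])
  rw [eq_top_iff, ← hmn, ← inf_eq_left.2 hmy, iterate_inf]
  exact inf_le_right

section Injective

universe u v

variable {R : Type u} [Ring R] {Q : Type v} [AddCommGroup Q] [Module R Q]
  [Small.{v} R] [Module.Injective R Q]
  {X Y ι : Type*} [AddCommGroup X] [Module R X] [AddCommGroup Y] [Module R Y]

theorem exists_comp_eq_of_ker_le (f : X →ₗ[R] Y) (g : X →ₗ[R] Q)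
    (hfg : LinearMap.ker f ≤ LinearMap.ker g) : ∃ u : Y →ₗ[R] Q, u ∘ₗ f = g := by
  obtain ⟨u, hu⟩ := Module.Injective.extension_property R Q _ _ ((LinearMap.ker f).liftQ f le_rfl)
    (LinearMap.ker_eq_bot.1 (Submodule.ker_liftQ_eq_bot _ _ _ le_rfl))
    ((LinearMap.ker f).liftQ g hfg)
  exact ⟨u, by rw [← (LinearMap.ker f).liftQ_mkQ g hfg, ← hu, LinearMap.comp_assoc,
    Submodule.liftQ_mkQ]⟩

theorem exists_finset_eq_sum_comp_of_iInf_ker_le [IsArtinian R X] (f : ι → X →ₗ[R] Y)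
    (g : X →ₗ[R] Q) (hfg : ⨅ i, LinearMap.ker (f i) ≤ LinearMap.ker g) :
    ∃ (s : Finset ι) (u : s → Y →ₗ[R] Q), g = ∑ i, u i ∘ₗ f i := by
  classical
  obtain ⟨s, hs⟩ := Finset.exists_inf_le fun i ↦ LinearMap.ker (f i)
  have hker : LinearMap.ker (LinearMap.pi fun i : s ↦ f i) ≤ LinearMap.ker g := by
    refine le_trans (le_iInf fun i ↦ le_trans ?_ (hs i)) hfg
    rw [LinearMap.ker_pi]
    exact Finset.le_inf fun i hi ↦ iInf_le _ (⟨i, hi⟩ : s)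
  obtain ⟨u, rfl⟩ := exists_comp_eq_of_ker_le _ g hker
  refine ⟨s, fun i ↦ u ∘ₗ LinearMap.single R (fun _ : s ↦ Y) i, LinearMap.ext fun x ↦ ?_⟩
  simp only [LinearMap.sum_apply, LinearMap.comp_apply, ← map_sum]
  exact congrArg u (LinearMap.sum_single_apply _ _).symm

end Injective

section TwoSidedIdeal

variable {R : Type*} [Ring R]

/-- The right annihilator `{a | I a = 0}` of a two-sided ideal `I`. -/
def rightAnnihilator (I : TwoSidedIdeal R) : TwoSidedIdeal R :=
  .mk' {a | ∀ x ∈ I, x * a = 0} (by simp)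
    (fun ha hb x hx ↦ by rw [mul_add, ha x hx, hb x hx, add_zero])
    (fun ha x hx ↦ by rw [mul_neg, ha x hx, neg_zero])
    (fun ha x hx ↦ by rw [← mul_assoc, ha _ (I.mul_mem_right _ _ hx)])
    (fun ha x hx ↦ by rw [← mul_assoc, ha x hx, zero_mul])

/-- The left annihilator `{a | a I = 0}` of a two-sided ideal `I`. -/
def leftAnnihilator (I : TwoSidedIdeal R) : TwoSidedIdeal R :=
  I.asIdeal.annihilator.toTwoSided

theorem mem_rightAnnihilator {I : TwoSidedIdeal R} {a : R} :
    a ∈ rightAnnihilator I ↔ ∀ x ∈ I, x * a = 0 := by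
  simp [rightAnnihilator]

theorem mem_leftAnnihilator {I : TwoSidedIdeal R} {a : R} :
    a ∈ leftAnnihilator I ↔ ∀ x ∈ I, a * x = 0 := by
  simp [leftAnnihilator, Submodule.mem_annihilator]

theorem rightAnnihilator_antitone : Antitone (rightAnnihilator (R := R)) :=
  fun _ _ hIJ _ ha ↦ mem_rightAnnihilator.2 fun x hx ↦ mem_rightAnnihilator.1 ha x (hIJ hx)

theorem rightAnnihilator_bot : rightAnnihilator (⊥ : TwoSidedIdeal R) = ⊤ := by
  ext a
  simp [mem_rightAnnihilator, TwoSidedIdeal.mem_bot, TwoSidedIdeal.mem_top]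

theorem rightAnnihilator_top : rightAnnihilator (⊤ : TwoSidedIdeal R) = ⊥ := by
  refine eq_bot_iff.2 fun a ha ↦ (TwoSidedIdeal.mem_bot R).2 ?_
  simpa using mem_rightAnnihilator.1 ha 1 (TwoSidedIdeal.mem_top R)

instance [IsArtinianRing R] : WellFoundedLT (TwoSidedIdeal R) :=
  have asIdeal_injective : Function.Injective (TwoSidedIdeal.asIdeal (R := R)) := fun _ _ hIJ ↦
    SetLike.ext fun x ↦ by rw [← TwoSidedIdeal.mem_asIdeal, hIJ, TwoSidedIdeal.mem_asIdeal]
  (TwoSidedIdeal.asIdeal.monotone.strictMono_of_injective asIdeal_injective).wellFoundedLT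

variable [Module.Injective R R]

theorem rightAnnihilator_leftAnnihilator [IsArtinianRing R] (I : TwoSidedIdeal R) :
    rightAnnihilator (leftAnnihilator I) = I := by
  refine le_antisymm (fun y hy ↦ ?_) fun y hy ↦
    mem_rightAnnihilator.2 fun x hx ↦ mem_leftAnnihilator.1 hx y hy
  obtain ⟨s, u, hu⟩ := exists_finset_eq_sum_comp_of_iInf_ker_le
    (fun k : I ↦ LinearMap.toSpanSingleton R R (k : R)) (LinearMap.toSpanSingleton R R y)
    (fun r hr ↦ by
      refine mem_rightAnnihilator.1 hy r (mem_leftAnnihilator.2 fun x hx ↦ ?_)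
      simpa using (Submodule.mem_iInf _).1 hr ⟨x, hx⟩)
  have hy_sum : y = ∑ k : s, u k k := by simpa using LinearMap.congr_fun hu 1
  rw [hy_sum]
  refine sum_mem fun k _ ↦ ?_
  rw [← mul_one (k : R), ← smul_eq_mul, map_smul, smul_eq_mul]
  exact I.mul_mem_right _ _ k.1.2

theorem exists_add_eq_of_inf_mul_eq_zero (I J : Ideal R) (c : R) (hc : ∀ x ∈ I ⊓ J, x * c = 0) :
    ∃ a b, a + b = c ∧ (∀ x ∈ I, x * a = 0) ∧ ∀ x ∈ J, x * b = 0 := by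
  obtain ⟨u, hu⟩ := exists_comp_eq_of_ker_le (I.mkQ.prod J.mkQ) (LinearMap.toSpanSingleton R R c)
    (fun x hx ↦ hc x (by simpa using hx))
  refine ⟨u (I.mkQ 1, 0), u (0, J.mkQ 1), ?_, fun x hx ↦ ?_, fun x hx ↦ ?_⟩
  · simpa [← map_add] using LinearMap.congr_fun hu 1
  · rw [← smul_eq_mul, ← map_smul, Prod.smul_mk, ← map_smul]
    simp [(Submodule.Quotient.mk_eq_zero I).2 hx, ← Prod.zero_eq_mk]
  · rw [← smul_eq_mul, ← map_smul, Prod.smul_mk, ← map_smul]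
    simp [(Submodule.Quotient.mk_eq_zero J).2 hx, ← Prod.zero_eq_mk]

/-- `I ↦ r(r(I))` for the right annihilator `r`, as a morphism of meet-semilattices with top. -/
def doubleRightAnnihilator (R : Type*) [Ring R] [Module.Injective R R] :
    InfTopHom (TwoSidedIdeal R) (TwoSidedIdeal R) where
  toFun I := rightAnnihilator (rightAnnihilator I)
  map_top' := by rw [rightAnnihilator_top, rightAnnihilator_bot]
  map_inf' I J := by
    have mono := (rightAnnihilator_antitone (R := R)).comp rightAnnihilator_antitone
    refine le_antisymm (le_inf (mono inf_le_left) (mono inf_le_right)) fun z hz ↦ ?_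
    obtain ⟨hzI, hzJ⟩ := (TwoSidedIdeal.mem_inf R).1 hz
    refine mem_rightAnnihilator.2 fun c hc ↦ ?_
    obtain ⟨a, b, rfl, ha, hb⟩ := exists_add_eq_of_inf_mul_eq_zero I.asIdeal J.asIdeal c
      fun x hx ↦ mem_rightAnnihilator.1 hc x (by simpa [TwoSidedIdeal.mem_inf] using hx)
    rw [add_mul, mem_rightAnnihilator.1 hzI a (mem_rightAnnihilator.2 (by simpa using ha)),
      mem_rightAnnihilator.1 hzJ b (mem_rightAnnihilator.2 (by simpa using hb)), add_zero]

theorem eq_top_of_rightAnnihilator_eq_bot [IsArtinianRing R] {I : TwoSidedIdeal R}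
    (hI : rightAnnihilator I = ⊥) : I = ⊤ := by
  refine eq_top_of_map_eq_top_of_surjective (doubleRightAnnihilator R) (fun J ↦ ?_) ?_
  · refine ⟨leftAnnihilator (leftAnnihilator J), ?_⟩
    change rightAnnihilator (rightAnnihilator _) = J
    rw [rightAnnihilator_leftAnnihilator, rightAnnihilator_leftAnnihilator]
  · change rightAnnihilator (rightAnnihilator I) = ⊤
    rw [hI, rightAnnihilator_bot]

end TwoSidedIdeal

section Dual

variable (R : Type*) {M : Type*} [Ring R] [IsArtinianRing R] [Module.Injective R R]
  [AddCommGroup M] [Module R M]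

theorem eq_zero_of_forall_dual_apply_eq_zero {x : M} (hx : ∀ φ : M →ₗ[R] R, φ x = 0) : x = 0 := by
  let I : TwoSidedIdeal R := (Submodule.span R {x}).annihilator.toTwoSided
  have mem_I {r : R} (hr : ∀ c : R, r • c • x = 0) : r ∈ I := by
    simpa [I, Submodule.mem_annihilator, Submodule.mem_span_singleton] using hr
  have hI : rightAnnihilator I = ⊥ := by
    refine eq_bot_iff.2 fun y hy ↦ (TwoSidedIdeal.mem_bot R).2 ?_
    obtain ⟨s, u, hu⟩ := exists_finset_eq_sum_comp_of_iInf_ker_le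
      (fun c : R ↦ LinearMap.toSpanSingleton R M (c • x)) (LinearMap.toSpanSingleton R R y)
      (fun r hr ↦ mem_rightAnnihilator.1 hy r
        (mem_I fun c ↦ by simpa using (Submodule.mem_iInf _).1 hr c))
    simpa [hx] using LinearMap.congr_fun hu 1
  have one_mem : (1 : R) ∈ I := by
    rw [eq_top_of_rightAnnihilator_eq_bot hI]
    exact TwoSidedIdeal.mem_top R
  simpa using Submodule.mem_annihilator.1 (Ideal.mem_toTwoSided.1 one_mem) x
    (Submodule.mem_span_singleton_self x)

theorem eq_of_forall_dual_apply_eq {x y : M} (h : ∀ φ : M →ₗ[R] R, φ x = φ y) : x = y :=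
  sub_eq_zero.1 <| eq_zero_of_forall_dual_apply_eq_zero R fun φ ↦ by rw [map_sub, h, sub_self]

theorem exists_forall_apply_eq_of_finite {ι : Type*} [Finite ι]
    (F : (M →ₗ[R] R) →ₗ[Rᵐᵒᵖ] R) (φ : ι → M →ₗ[R] R) : ∃ m : M, ∀ i, F (φ i) = φ i m := by
  classical
  have := Fintype.ofFinite ι
  suffices (fun i ↦ F (φ i)) ∈ LinearMap.range (LinearMap.pi φ) by
    obtain ⟨m, hm⟩ := this
    exact ⟨m, fun i ↦ (congrFun hm i).symm⟩
  rw [← Submodule.Quotient.mk_eq_zero]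
  refine eq_zero_of_forall_dual_apply_eq_zero R fun ψ ↦ ?_
  let h : (ι → R) →ₗ[R] R := ψ ∘ₗ (LinearMap.range (LinearMap.pi φ)).mkQ
  let c (i : ι) : R := h fun j ↦ if i = j then 1 else 0
  have relation : ∑ i, op (c i) • φ i = 0 := by
    ext m
    have hm : h (LinearMap.pi φ m) = 0 := by
      rw [LinearMap.comp_apply, Submodule.mkQ_apply,
        (Submodule.Quotient.mk_eq_zero _).2 (LinearMap.mem_range_self _ m), map_zero]
    rw [LinearMap.pi_apply_eq_sum_univ] at hm
    simpa using hm
  calc h (fun i ↦ F (φ i)) = ∑ i, F (φ i) * c i := LinearMap.pi_apply_eq_sum_univ h _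
    _ = F (∑ i, op (c i) • φ i) := by simp [map_sum]
    _ = 0 := by rw [relation, map_zero]

theorem bijective_applyₗ' [IsArtinian R M] :
    Function.Bijective (LinearMap.applyₗ' Rᵐᵒᵖ : M →+ (M →ₗ[R] R) →ₗ[Rᵐᵒᵖ] R) := by
  classical
  refine ⟨fun x y hxy ↦ eq_of_forall_dual_apply_eq R (LinearMap.congr_fun hxy), fun F ↦ ?_⟩
  obtain ⟨s, hs⟩ := Finset.exists_inf_le fun φ : M →ₗ[R] R ↦ LinearMap.ker φ
  have eq_of_forall_mem {x y : M} (hxy : ∀ φ ∈ s, φ x = φ y) : x = y :=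
    eq_of_forall_dual_apply_eq R fun φ ↦ LinearMap.sub_mem_ker_iff.1 <| hs φ <|
      Submodule.mem_finsetInf.2 fun φ hφ ↦ LinearMap.sub_mem_ker_iff.2 (hxy φ hφ)
  obtain ⟨m, hm⟩ := exists_forall_apply_eq_of_finite R F fun φ : s ↦ (φ : M →ₗ[R] R)
  refine ⟨m, LinearMap.ext fun φ ↦ ?_⟩
  -- Since `s` separates points, adding `φ` to it cannot change the solution `m`.
  obtain ⟨m', hm'⟩ := exists_forall_apply_eq_of_finite R F
    fun φ : (insert φ s : Finset (M →ₗ[R] R)) ↦ (φ : M →ₗ[R] R)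
  have hmm' : m = m' := eq_of_forall_mem fun ψ hψ ↦
    (hm ⟨ψ, hψ⟩).symm.trans (hm' ⟨ψ, Finset.mem_insert_of_mem hψ⟩)
  rw [hmm']
  exact (hm' ⟨φ, Finset.mem_insert_self φ s⟩).symm

theorem bijective_lcomp_dual [IsArtinian R M] : Function.Bijective
    (LinearMap.lcomp Rᵐᵒᵖ R : Module.End R M → Module.End Rᵐᵒᵖ (M →ₗ[R] R)) := by
  refine ⟨fun b₁ b₂ h ↦ LinearMap.ext fun m ↦ eq_of_forall_dual_apply_eq R fun φ ↦
    LinearMap.congr_fun (LinearMap.congr_fun h φ) m, fun T ↦ ?_⟩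
  choose b hb using fun m : M ↦ (bijective_applyₗ' R).surjective (LinearMap.applyₗ' Rᵐᵒᵖ m ∘ₗ T)
  have apply_b (φ : M →ₗ[R] R) (m : M) : φ (b m) = T φ m := LinearMap.congr_fun (hb m) φ
  refine ⟨⟨⟨b, fun x y ↦ ?_⟩, fun r x ↦ ?_⟩, LinearMap.ext fun φ ↦ LinearMap.ext (apply_b φ)⟩ <;>
  exact eq_of_forall_dual_apply_eq R fun φ ↦ by simp [apply_b]

end Dual

section Generator

variable (R M : Type*) [Ring R] [AddCommGroup M] [Module R M]

/-- `M` is a generator of the category of `R`-modules, expressed as `1` lying in its trace ideal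
`∑ ψ(M)`, where `ψ` runs over `Hom_R(M, R)`. -/
def IsGenerator : Prop :=
  ∃ (s : Finset M) (ψ : s → M →ₗ[R] R), ∑ m, ψ m m = 1

theorem isGenerator_of_faithfulSMul [IsArtinianRing R] [Module.Injective R R] [FaithfulSMul R M] :
    IsGenerator R M := by
  obtain ⟨s, ψ, hψ⟩ := exists_finset_eq_sum_comp_of_iInf_ker_le
    (LinearMap.toSpanSingleton R M) (LinearMap.id (M := R)) (fun r hr ↦ by
      refine FaithfulSMul.eq_of_smul_eq_smul (α := M) fun m ↦ ?_
      simpa using (Submodule.mem_iInf _).1 hr m)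
  exact ⟨s, ψ, by simpa using (LinearMap.congr_fun hψ 1).symm⟩

variable {R M}

theorem IsGenerator.eq_of_forall_smul_eq (hM : IsGenerator R M) {r r' : R}
    (h : ∀ m : M, r • m = r' • m) : r = r' := by
  obtain ⟨s, ψ, hψ⟩ := hM
  rw [← mul_one r, ← mul_one r', ← hψ, Finset.mul_sum, Finset.mul_sum]
  simp only [← smul_eq_mul, ← map_smul, h]

theorem IsGenerator.eq_of_forall_dual_apply_mul_eq (hM : IsGenerator R M) {r r' : R}
    (h : ∀ (φ : M →ₗ[R] R) (m : M), φ m * r = φ m * r') : r = r' := by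
  obtain ⟨s, ψ, hψ⟩ := hM
  rw [← one_mul r, ← one_mul r', ← hψ, Finset.sum_mul, Finset.sum_mul]
  simp only [h]

theorem IsGenerator.exists_eq_op_smul (hM : IsGenerator R M) (T : (M →ₗ[R] R) →+ (M →ₗ[R] R))
    (hT : ∀ (φ : M →ₗ[R] R) (b : Module.End R M), T (φ ∘ₗ b) = T φ ∘ₗ b) :
    ∃ r : R, ∀ φ, T φ = op r • φ := by
  obtain ⟨s, ψ, hψ⟩ := hM
  refine ⟨∑ m, T (ψ m) m, fun φ ↦ ?_⟩
  have hφ : φ = ∑ m, ψ m ∘ₗ φ.smulRight (m : M) := by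
    ext x
    simp only [LinearMap.sum_apply, LinearMap.comp_apply, LinearMap.smulRight_apply, map_smul,
      smul_eq_mul, ← Finset.mul_sum, hψ, mul_one]
  ext x
  conv_lhs => rw [hφ]
  simp [hT, Finset.mul_sum]

/-- The comparison map from the `R`-dual `Hom_R(M, R)` to the left dual `^∨M = Hom_B(M, B)` over
`B = End_R(M)`; it sends `φ` to `x ↦ (y ↦ φ(y) x)`. -/
def leftDualHom : (M →ₗ[R] R) →+ (M →ₗ[Module.End R M] Module.End R M) where
  toFun φ :=
    { toFun := φ.smulRight
      map_add' x y := by ext; simp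
      map_smul' b x := by ext; simp }
  map_zero' := by ext; simp
  map_add' φ φ' := by ext; simp [add_smul]

theorem leftDualHom_apply_apply (φ : M →ₗ[R] R) (x y : M) : leftDualHom φ x y = φ y • x := rfl

theorem bijective_leftDualHom (hM : IsGenerator R M) :
    Function.Bijective (leftDualHom (R := R) (M := M)) := by
  refine ⟨fun φ φ' h ↦ LinearMap.ext fun y ↦ hM.eq_of_forall_smul_eq fun x ↦
    LinearMap.congr_fun (LinearMap.congr_fun h x) y, fun g ↦ ?_⟩
  obtain ⟨s, ψ, hψ⟩ := hM
  refine ⟨∑ m : s, ψ m ∘ₗ g m, LinearMap.ext fun x ↦ ?_⟩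
  have hx : ∑ m : s, (ψ m).smulRight x • (m : M) = x := by
    simp only [Module.End.smul_def, LinearMap.smulRight_apply, ← Finset.sum_smul, hψ, one_smul]
  ext y
  conv_rhs => rw [← hx]
  simp only [map_sum, map_smul]
  simp [leftDualHom_apply_apply]

/-- The additive isomorphism `Hom_R(M, R) ≃ ^∨M = Hom_B(M, B)` for a generator `M`. -/
noncomputable def leftDualEquiv (hM : IsGenerator R M) :
    (M →ₗ[R] R) ≃+ (M →ₗ[Module.End R M] Module.End R M) :=
  .ofBijective leftDualHom (bijective_leftDualHom hM)

theorem leftDualEquiv_comp (hM : IsGenerator R M) (φ : M →ₗ[R] R) (b : Module.End R M) (x : M) :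
    leftDualEquiv hM (φ ∘ₗ b) x = leftDualEquiv hM φ x * b := rfl

theorem leftDualEquiv_op_smul (hM : IsGenerator R M) (r : R) (φ : M →ₗ[R] R) (x : M) :
    leftDualEquiv hM (op r • φ) x = leftDualEquiv hM φ (r • x) := by
  ext y
  exact mul_smul (φ y) r x

end Generator

section LeftDual

variable {R M : Type*} [Ring R] [AddCommGroup M] [Module R M]

theorem eq_of_forall_leftDual_apply_mul_eq [IsArtinianRing R] [Module.Injective R R]
    (hM : IsGenerator R M) {b₁ b₂ : Module.End R M}
    (h : ∀ (g : M →ₗ[Module.End R M] Module.End R M) (m : M), g m * b₁ = g m * b₂) : b₁ = b₂ := by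
  refine LinearMap.ext fun y ↦ eq_of_forall_dual_apply_eq R fun φ ↦ ?_
  suffices φ ∘ₗ b₁ = φ ∘ₗ b₂ from LinearMap.congr_fun this y
  exact (leftDualEquiv hM).injective (LinearMap.ext (h (leftDualEquiv hM φ)))

theorem exists_forall_leftDual_apply_eq_mul [IsArtinianRing R] [Module.Injective R R]
    [IsArtinian R M] (hM : IsGenerator R M)
    (T : (M →ₗ[Module.End R M] Module.End R M) →+ (M →ₗ[Module.End R M] Module.End R M))
    (hT : ∀ (r : R) (g g' : M →ₗ[Module.End R M] Module.End R M),
      (∀ m : M, g' m = g (r • m)) → ∀ m : M, T g' m = T g (r • m)) :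
    ∃ b : Module.End R M, ∀ (g : M →ₗ[Module.End R M] Module.End R M) (m : M),
      T g m = g m * b := by
  let e := leftDualEquiv hM
  let T' : Module.End Rᵐᵒᵖ (M →ₗ[R] R) :=
    { (e.symm : _ →+ _).comp (T.comp (e : _ →+ _)) with
      map_smul' r φ := e.injective <| LinearMap.ext fun m ↦ by
        obtain ⟨r, rfl⟩ := op_surjective r
        have hr := hT r (e φ) (e (op r • φ)) (leftDualEquiv_op_smul hM r φ) m
        simpa [e, leftDualEquiv_op_smul] using hr }
  obtain ⟨b, hb⟩ := (bijective_lcomp_dual R).surjective T'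
  refine ⟨b, fun g m ↦ ?_⟩
  obtain ⟨φ, rfl⟩ := e.surjective g
  have hφ : φ ∘ₗ b = e.symm (T (e φ)) := LinearMap.congr_fun hb φ
  rw [← leftDualEquiv_comp hM, hφ]
  simp [e]

theorem eq_of_forall_leftDual_apply_smul_eq (hM : IsGenerator R M) {r₁ r₂ : R}
    (h : ∀ (g : M →ₗ[Module.End R M] Module.End R M) (m : M), g (r₁ • m) = g (r₂ • m)) :
    r₁ = r₂ := by
  refine hM.eq_of_forall_dual_apply_mul_eq fun φ m ↦ ?_
  suffices op r₁ • φ = op r₂ • φ from LinearMap.congr_fun this m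
  refine (leftDualEquiv hM).injective (LinearMap.ext fun x ↦ ?_)
  rw [leftDualEquiv_op_smul, leftDualEquiv_op_smul, h]

theorem exists_forall_leftDual_apply_eq_apply_smul (hM : IsGenerator R M)
    (T : (M →ₗ[Module.End R M] Module.End R M) →+ (M →ₗ[Module.End R M] Module.End R M))
    (hT : ∀ (b : Module.End R M) (g g' : M →ₗ[Module.End R M] Module.End R M),
      (∀ m : M, g' m = g m * b) → ∀ m : M, T g' m = T g m * b) :
    ∃ r : R, ∀ (g : M →ₗ[Module.End R M] Module.End R M) (m : M), T g m = g (r • m) := by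
  let e := leftDualEquiv hM
  obtain ⟨r, hr⟩ := hM.exists_eq_op_smul ((e.symm : _ →+ _).comp (T.comp (e : _ →+ _)))
    fun φ b ↦ e.injective <| LinearMap.ext fun m ↦ by
      simpa [e, leftDualEquiv_comp] using hT b (e φ) (e (φ ∘ₗ b)) (leftDualEquiv_comp hM φ b) m
  refine ⟨r, fun g m ↦ ?_⟩
  obtain ⟨φ, rfl⟩ := e.surjective g
  have hφ : e.symm (T (e φ)) = op r • φ := hr φ
  rw [← leftDualEquiv_op_smul hM, ← hφ]
  simp [e]

end LeftDual

end DoubleCentralizer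

theorem stmt_9_general (A : Type*) [Ring A] [IsArtinianRing Aᵐᵒᵖ] [Module.Injective Aᵐᵒᵖ A]
    (M : Type*) [AddCommGroup M] [Module Aᵐᵒᵖ M] [Module.Finite Aᵐᵒᵖ M] [FaithfulSMul Aᵐᵒᵖ M] :
    (∀ b₁ b₂ : Module.End Aᵐᵒᵖ M,
      (∀ (g : M →ₗ[Module.End Aᵐᵒᵖ M] Module.End Aᵐᵒᵖ M) (m : M),
        g m * b₁ = g m * b₂) → b₁ = b₂) ∧
    (∀ T : (M →ₗ[Module.End Aᵐᵒᵖ M] Module.End Aᵐᵒᵖ M) →+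
            (M →ₗ[Module.End Aᵐᵒᵖ M] Module.End Aᵐᵒᵖ M),
      (∀ (a : A) (g g' : M →ₗ[Module.End Aᵐᵒᵖ M] Module.End Aᵐᵒᵖ M),
        (∀ m : M, g' m = g ((op a) • m)) →
          ∀ m : M, (T g') m = (T g) ((op a) • m)) →
      ∃ b : Module.End Aᵐᵒᵖ M, ∀ (g : M →ₗ[Module.End Aᵐᵒᵖ M] Module.End Aᵐᵒᵖ M)
        (m : M), (T g) m = g m * b) ∧
    (∀ a₁ a₂ : A,
      (∀ (g : M →ₗ[Module.End Aᵐᵒᵖ M] Module.End Aᵐᵒᵖ M) (m : M),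
        g ((op a₁) • m) = g ((op a₂) • m)) → a₁ = a₂) ∧
    (∀ T : (M →ₗ[Module.End Aᵐᵒᵖ M] Module.End Aᵐᵒᵖ M) →+
            (M →ₗ[Module.End Aᵐᵒᵖ M] Module.End Aᵐᵒᵖ M),
      (∀ (b : Module.End Aᵐᵒᵖ M) (g g' : M →ₗ[Module.End Aᵐᵒᵖ M] Module.End Aᵐᵒᵖ M),
        (∀ m : M, g' m = g m * b) → ∀ m : M, (T g') m = (T g) m * b) →
      ∃ a : A, ∀ (g : M →ₗ[Module.End Aᵐᵒᵖ M] Module.End Aᵐᵒᵖ M) (m : M),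
        (T g) m = g ((op a) • m)) := by
  have : Module.Injective Aᵐᵒᵖ Aᵐᵒᵖ := (Module.Baer.of_equiv
    { opAddEquiv (α := A) with map_smul' _ _ := rfl } (.of_injective inferInstance)).injective
  have hM : DoubleCentralizer.IsGenerator Aᵐᵒᵖ M :=
    DoubleCentralizer.isGenerator_of_faithfulSMul _ _
  refine ⟨fun _ _ ↦ DoubleCentralizer.eq_of_forall_leftDual_apply_mul_eq hM,
    fun T hT ↦ DoubleCentralizer.exists_forall_leftDual_apply_eq_mul hM T fun r ↦ hT r.unop,
    fun _ _ h ↦ op_injective (DoubleCentralizer.eq_of_forall_leftDual_apply_smul_eq hM h),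
    fun T hT ↦ ?_⟩
  obtain ⟨r, hr⟩ := DoubleCentralizer.exists_forall_leftDual_apply_eq_apply_smul hM T hT
  exact ⟨r.unop, hr⟩

/-- Let `A` be a finite-dimensional self-injective algebra over a field `k`,
`M` a finite-dimensional faithful right `A`-module, `B = End_A(M)`, and
`^∨M = Hom_B(M, B)` the left dual, an `(A,B)`-bimodule with left `A`-action
`(a·g)(m) = g(m·a)` and right `B`-action `(g·b)(m) = g(m)·b`.  Then `(A,B)` satisfies the
double centralizer property on `^∨M`: the canonical map `B → End_A(^∨M)` (acting via the
right `B`-action) and the canonical map `A → End_B(^∨M)` (acting via the left `A`-action)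
are both bijective; i.e. `End_A(^∨M) ≅ B` and `End_B(^∨M) ≅ A`. -/
theorem stmt_9 (k : Type*) [Field k] (A : Type*) [Ring A] [Algebra k A]
    [FiniteDimensional k A] [Module.Injective Aᵐᵒᵖ A]
    (M : Type*) [AddCommGroup M] [Module k M] [Module Aᵐᵒᵖ M]
    [IsScalarTower k Aᵐᵒᵖ M] [FiniteDimensional k M] [FaithfulSMul Aᵐᵒᵖ M] :
    -- `End_A(^∨M) ≅ B`: injectivity of b ↦ (g ↦ g·b) ...
    (∀ b₁ b₂ : Module.End Aᵐᵒᵖ M,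
      (∀ (g : M →ₗ[Module.End Aᵐᵒᵖ M] Module.End Aᵐᵒᵖ M) (m : M),
        g m * b₁ = g m * b₂) → b₁ = b₂) ∧
    -- ... and surjectivity: every additive endomorphism of ^∨M commuting with the left
    -- A-action is right multiplication by some b ∈ B
    (∀ T : (M →ₗ[Module.End Aᵐᵒᵖ M] Module.End Aᵐᵒᵖ M) →+
            (M →ₗ[Module.End Aᵐᵒᵖ M] Module.End Aᵐᵒᵖ M),
      (∀ (a : A) (g g' : M →ₗ[Module.End Aᵐᵒᵖ M] Module.End Aᵐᵒᵖ M),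
        (∀ m : M, g' m = g ((op a) • m)) →
          ∀ m : M, (T g') m = (T g) ((op a) • m)) →
      ∃ b : Module.End Aᵐᵒᵖ M, ∀ (g : M →ₗ[Module.End Aᵐᵒᵖ M] Module.End Aᵐᵒᵖ M)
        (m : M), (T g) m = g m * b) ∧
    -- `End_B(^∨M) ≅ A`: injectivity of a ↦ (g ↦ a·g) ...
    (∀ a₁ a₂ : A,
      (∀ (g : M →ₗ[Module.End Aᵐᵒᵖ M] Module.End Aᵐᵒᵖ M) (m : M),
        g ((op a₁) • m) = g ((op a₂) • m)) → a₁ = a₂) ∧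
    -- ... and surjectivity: every additive endomorphism of ^∨M commuting with the right
    -- B-action is given by the left action of some a ∈ A
    (∀ T : (M →ₗ[Module.End Aᵐᵒᵖ M] Module.End Aᵐᵒᵖ M) →+
            (M →ₗ[Module.End Aᵐᵒᵖ M] Module.End Aᵐᵒᵖ M),
      (∀ (b : Module.End Aᵐᵒᵖ M) (g g' : M →ₗ[Module.End Aᵐᵒᵖ M] Module.End Aᵐᵒᵖ M),
        (∀ m : M, g' m = g m * b) → ∀ m : M, (T g') m = (T g) m * b) →
      ∃ a : A, ∀ (g : M →ₗ[Module.End Aᵐᵒᵖ M] Module.End Aᵐᵒᵖ M) (m : M),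
        (T g) m = g ((op a) • m)) := by
  have : IsArtinianRing Aᵐᵒᵖ := .of_finite k _
  have : Module.Finite Aᵐᵒᵖ M := .of_restrictScalars_finite k _ _
  exact stmt_9_general A M
end

section
/- Let l ≥ n ≥ 0 and let λ ∈ P_n^l be determined by positions j_1 < ⋯ < j_n of its entries equal to 1, with y^λ = y_1^{l−j_1} ⋯ y_n^{l−j_n} in the cyclotomic nilHecke algebra NH_n^l. Then the derivation ∂ (with ∂(y_i) = y_i², ∂(ψ_i) = −y_i ψ_i − ψ_i y_{i+1}) preserves the two-sided ideal (NH_n^l)^{>μ} spanned by the cellular basis elements ψ_h* y^λ ψ_t over all partitions λ > μ in the dominance order and tableaux h, t of shape λ. -/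
/-! The cyclotomic nilHecke algebra `NH_n^l` over a field `k` of characteristic `p`,
presented by generators `y i` (`i < n`) and `ψ i` (`i + 1 < n`), the nilHecke relations,
and the cyclotomic relation `y_0^l = 0` (0-based indexing of the paper's `y_1^l = 0`). -/

namespace Stmt17

variable (k : Type*) [Field k]

def Yf (i : ℕ) : FreeAlgebra k (ℕ ⊕ ℕ) := FreeAlgebra.ι k (Sum.inl i)

def Pf (i : ℕ) : FreeAlgebra k (ℕ ⊕ ℕ) := FreeAlgebra.ι k (Sum.inr i)

/-- The defining relations of the cyclotomic nilHecke algebra `NH_n^l`. -/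
inductive Rel (l n : ℕ) : FreeAlgebra k (ℕ ⊕ ℕ) → FreeAlgebra k (ℕ ⊕ ℕ) → Prop
  | yy (i j : ℕ) : Rel l n (Yf k i * Yf k j) (Yf k j * Yf k i)
  | ypsi (i j : ℕ) (h1 : i ≠ j) (h2 : i ≠ j + 1) :
      Rel l n (Yf k i * Pf k j) (Pf k j * Yf k i)
  | yp (i : ℕ) (h : i + 1 < n) : Rel l n (Yf k i * Pf k i) (Pf k i * Yf k (i+1) + 1)
  | py (i : ℕ) (h : i + 1 < n) : Rel l n (Pf k i * Yf k i) (Yf k (i+1) * Pf k i + 1)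
  | psisq (i : ℕ) : Rel l n (Pf k i * Pf k i) 0
  | far (i j : ℕ) (h : i + 1 < j) : Rel l n (Pf k i * Pf k j) (Pf k j * Pf k i)
  | braid (i : ℕ) :
      Rel l n (Pf k i * Pf k (i+1) * Pf k i) (Pf k (i+1) * Pf k i * Pf k (i+1))
  | cyc : Rel l n (Yf k 0 ^ l) 0
  | ybound (i : ℕ) (h : n ≤ i) : Rel l n (Yf k i) 0
  | pbound (i : ℕ) (h : n ≤ i + 1) : Rel l n (Pf k i) 0

/-- The cyclotomic nilHecke algebra `NH_n^l`. -/
abbrev NHc (l n : ℕ) := RingQuot (Rel k l n)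

def y (l n i : ℕ) : NHc k l n := RingQuot.mkAlgHom k (Rel k l n) (Yf k i)

def psi (l n i : ℕ) : NHc k l n := RingQuot.mkAlgHom k (Rel k l n) (Pf k i)

/-- `ψ_{i₁}⋯ψ_{i_r}` along a list of indices. -/
def psiList (l n : ℕ) (L : List ℕ) : NHc k l n := (L.map (psi k l n)).prod

/-- A partition `λ ∈ P_n^l`, encoded by the (0-based) positions `j 0 < j 1 < ⋯ < j (n-1)`
of its entries equal to `1`. -/
def IsPos (l n : ℕ) (j : ℕ → ℕ) : Prop :=
  (∀ a b : ℕ, a < b → b < n → j a < j b) ∧ (∀ a : ℕ, a < n → j a < l)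

/-- `y^λ = y_0^{l−1−j₀} ⋯ y_{n-1}^{l−1−j_{n-1}}` (0-based form of
`y_1^{l−j_1} ⋯ y_n^{l−j_n}`). -/
def yLam (l n : ℕ) (j : ℕ → ℕ) : NHc k l n :=
  ((List.range n).map (fun i => y k l n i ^ (l - 1 - j i))).prod

/-- The `k`-th prefix sum of the 0-1 sequence determined by positions `j`:
the number of `i < n` with `j i < K`. -/
def pcount (n : ℕ) (j : ℕ → ℕ) (K : ℕ) : ℕ :=
  ((List.range n).filter (fun i => j i < K)).length

/-- Dominance: `λ > μ` (strictly) in the dominance order on `P_n^l`. -/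
def DomGT (n : ℕ) (lam mu : ℕ → ℕ) : Prop :=
  (∀ K : ℕ, pcount n mu K ≤ pcount n lam K) ∧ (∃ i : ℕ, i < n ∧ lam i ≠ mu i)

/-- The cell ideal `(NH_n^l)^{>μ}`: the span of the elements `ψ_h^* y^λ ψ_t` for
partitions `λ > μ`; since the `ψ_w`'s for `w ∈ S_n` are exactly the nonzero products of
the crossing generators, this is the span of all `(products of ψ's) · y^λ · (products
of ψ's)` with `λ > μ`. -/
def cellIdeal (l n : ℕ) (mu : ℕ → ℕ) : Submodule k (NHc k l n) :=
  Submodule.span k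
    { x | ∃ j : ℕ → ℕ, IsPos l n j ∧ DomGT n j mu ∧
      ∃ a b : List ℕ, x = psiList k l n a * yLam k l n j * psiList k l n b }

end Stmt17

/-! Write `u = y i`, `z = y (i + 1)`, `q = ψ i`.  The nilHecke relation `q u = z q + 1` gives the
divided-difference formula `q u^(d+1) = z^(d+1) q + ∑_{a+b=d} u^a z^b`.  It expresses its summand
`z^d` through monomials which have larger degree, or the same degree and a positive power of `u`.
Multiplying by a monomial symmetric in `u` and `z`, which commutes with `q`, one can thus rewrite
every `y^f` with `f i ≤ f (i + 1)`.  As the `y i` are nilpotent this stops, at monomials with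
strictly decreasing exponents, that is, at elements `y^ν`.  A step never lowers `f i`, nor
`f (i + 1)` below `f i`; since `y^λ` has strictly decreasing exponents, every monomial arising from
a multiple of `y^λ` is again one, whence `ν ≥ λ` in the dominance order.  So the cell ideal absorbs
the `y i` as well as the `ψ i` and is two-sided.  As `∂(y^λ)` is a multiple of `y^λ`, the Leibniz
rule finishes the proof. -/

namespace Stmt17

section Ring

variable {A : Type*} [Ring A] {u z q : A}

theorem mul_pow_eq_pow_mul_add_geom_sum (hqu : q * u = z * q + 1) (huz : Commute u z) (d : ℕ) :
    q * u ^ d = z ^ d * q + ∑ a ∈ Finset.range d, u ^ a * z ^ (d - 1 - a) := by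
  induction d with
  | zero => simp
  | succ d ih =>
    calc q * u ^ (d + 1) = z * (q * u ^ d) + u ^ d := by
          rw [pow_succ', ← mul_assoc, hqu, add_mul, one_mul, mul_assoc]
      _ = z ^ (d + 1) * q + (u ^ d + z * ∑ a ∈ Finset.range d, u ^ a * z ^ (d - 1 - a)) := by
          rw [ih, mul_add, ← mul_assoc, ← pow_succ']
          abel
      _ = _ := by rw [← huz.geom_sum₂_succ_eq, Nat.add_sub_cancel]

theorem commute_mul_of_mul_eq (hqu : q * u = z * q + 1) (huq : u * q = q * z + 1)
    (huz : Commute u z) : Commute q (u * z) := by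
  calc q * (u * z) = z * (q * z + 1) := by rw [← mul_assoc, hqu]; noncomm_ring
    _ = u * z * q := by rw [← huq, ← mul_assoc, huz.eq]

/-- The element `1 - (u - z) q` of the nilHecke algebra acts as the transposition of `u` and `z`. -/
def intertwiner (u z q : A) : A := 1 - (u - z) * q

theorem semiconjBy_intertwiner (hqu : q * u = z * q + 1) (huz : Commute u z) :
    SemiconjBy (intertwiner u z q) u z := by
  calc (1 - (u - z) * q) * u = u - (u - z) * (q * u) := by noncomm_ring
    _ = z - (u * z) * q + z * z * q := by rw [hqu]; noncomm_ring
    _ = z * (1 - (u - z) * q) := by rw [huz.eq]; noncomm_ring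

theorem intertwiner_mul_self (hqu : q * u = z * q + 1) (huq : u * q = q * z + 1)
    (hqq : q * q = 0) : intertwiner u z q * intertwiner u z q = 1 := by
  have hq_sub : q * (u - z) = 2 - (u - z) * q := by
    rw [mul_sub, sub_mul, hqu, huq, ← one_add_one_eq_two]; abel
  calc (1 - (u - z) * q) * (1 - (u - z) * q)
      = 1 - 2 * ((u - z) * q) + (u - z) * (q * (u - z)) * q := by noncomm_ring
    _ = 1 - (u - z) * (u - z) * (q * q) := by rw [hq_sub]; noncomm_ring
    _ = 1 := by rw [hqq, mul_zero, sub_zero]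

theorem pow_eq_zero_of_pow_eq_zero (hqu : q * u = z * q + 1) (huq : u * q = q * z + 1)
    (hqq : q * q = 0) (huz : Commute u z) {d : ℕ} (hu : u ^ d = 0) : z ^ d = 0 := by
  have hz := ((semiconjBy_intertwiner hqu huz).pow_right d).eq
  rw [← mul_one (z ^ d), ← intertwiner_mul_self hqu huq hqq, ← mul_assoc, ← hz, hu, mul_zero,
    zero_mul]

theorem mul_pow_mem_of_divided_difference (S : AddSubgroup A) {c : A} {d : ℕ}
    (hqu : q * u = z * q + 1) (huz : Commute u z) (hqc : Commute q c)
    (hleft : ∀ x ∈ S, q * x ∈ S) (hright : ∀ x ∈ S, x * q ∈ S)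
    (hS : ∀ a b, d ≤ a + b → 0 < a ∨ d < b → c * u ^ a * z ^ b ∈ S) : c * z ^ d ∈ S := by
  have hexpand : c * z ^ d = q * (c * u ^ (d + 1) * z ^ 0) - c * u ^ 0 * z ^ (d + 1) * q -
      ∑ a ∈ Finset.range d, c * u ^ (a + 1) * z ^ (d - (a + 1)) := by
    have hdd := congrArg (c * ·) (mul_pow_eq_pow_mul_add_geom_sum hqu huz (d + 1))
    simp only [Finset.sum_range_succ', mul_add, Finset.mul_sum, ← mul_assoc, ← hqc.eq] at hdd
    simp only [pow_zero, mul_one, ← mul_assoc, hdd, Nat.add_sub_cancel, Nat.sub_zero]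
    abel
  rw [hexpand]
  refine sub_mem (sub_mem (hleft _ (hS _ _ ?_ ?_)) (hright _ (hS _ _ ?_ ?_)))
    (sum_mem fun a _ => hS _ _ ?_ ?_)
  all_goals omega

/-- Logarithmic derivatives add up. -/
theorem exists_map_eq_mul_of_mem_closure {S : Set A} {D : A → A}
    (hLeib : ∀ a b, D (a * b) = D a * b + a * D b)
    (hS : ∀ s ∈ S, ∃ g ∈ S.centralizer, D s = s * g) {x : A} (hx : x ∈ Submonoid.closure S) :
    ∃ g ∈ S.centralizer, D x = x * g := by
  induction hx using Submonoid.closure_induction with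
  | mem s hs => exact hS s hs
  | one => exact ⟨0, Set.zero_mem_centralizer, by simpa using hLeib 1 1⟩
  | mul x y _ hy ihx ihy =>
    obtain ⟨g, hg, hDx⟩ := ihx
    obtain ⟨g', hg', hDy⟩ := ihy
    have hgy : g * y = y * g :=
      Submonoid.closure_le_centralizer_centralizer S hy g hg
    refine ⟨g + g', Set.add_mem_centralizer hg hg', ?_⟩
    rw [hLeib, hDx, hDy, mul_assoc x g, hgy]
    noncomm_ring

variable {R : Type*} [CommRing R] [Algebra R A] {S : Set A} {I : Submodule R A}

theorem mul_mem_of_adjoin_eq_top_left (hS : Algebra.adjoin R S = ⊤)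
    (hI : ∀ s ∈ S, ∀ x ∈ I, s * x ∈ I) (a : A) {x : A} (hx : x ∈ I) : a * x ∈ I := by
  induction hS ▸ Algebra.mem_top (R := R) (x := a) using Algebra.adjoin_induction
    generalizing x with
  | mem s hs => exact hI s hs x hx
  | algebraMap r => simpa only [← Algebra.smul_def] using I.smul_mem r hx
  | add a b _ _ iha ihb => simpa only [add_mul] using I.add_mem (iha hx) (ihb hx)
  | mul a b _ _ iha ihb => simpa only [mul_assoc] using iha (ihb hx)

theorem mul_mem_of_adjoin_eq_top_right (hS : Algebra.adjoin R S = ⊤)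
    (hI : ∀ s ∈ S, ∀ x ∈ I, x * s ∈ I) (a : A) {x : A} (hx : x ∈ I) : x * a ∈ I := by
  induction hS ▸ Algebra.mem_top (R := R) (x := a) using Algebra.adjoin_induction
    generalizing x with
  | mem s hs => exact hI s hs x hx
  | algebraMap r => simpa only [← Algebra.commutes, ← Algebra.smul_def] using I.smul_mem r hx
  | add a b _ _ iha ihb => simpa only [mul_add] using I.add_mem (iha hx) (ihb hx)
  | mul a b _ _ iha ihb => simpa only [mul_assoc] using ihb (iha hx)

end Ring

theorem prod_range_pow_add_single {M : Type*} [Monoid M] {x : ℕ → M}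
    (hx : ∀ i j, Commute (x i) (x j)) (f : ℕ → ℕ) (c : ℕ) {i m : ℕ} (hi : i < m) :
    ((List.range m).map fun j => x j ^ (f + Pi.single i c : ℕ → ℕ) j).prod =
      ((List.range m).map fun j => x j ^ f j).prod * x i ^ c := by
  induction m with
  | zero => omega
  | succ m ih =>
    simp only [List.prod_range_succ]
    rcases Nat.lt_succ_iff_lt_or_eq.1 hi with him | rfl
    · rw [ih him, Pi.add_apply, Pi.single_eq_of_ne him.ne', add_zero, mul_assoc, mul_assoc,
        ((hx i m).pow_pow c (f m)).eq]
    · have hprefix : (List.range i).map (fun j => x j ^ (f + Pi.single i c : ℕ → ℕ) j) =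
          (List.range i).map fun j => x j ^ f j :=
        List.map_congr_left fun j hj => by
          rw [Pi.add_apply, Pi.single_eq_of_ne (List.mem_range.1 hj).ne, add_zero]
      rw [hprefix, Pi.add_apply, Pi.single_eq_same, pow_add, mul_assoc]

section Weight

/-- A weight on exponent vectors `f 0, …, f (n - 1)` which increases when a unit is added, and when
a unit is moved to a smaller index. It serves as termination measure for the straightening of
monomials. -/
def weight (n : ℕ) (f : ℕ → ℕ) : ℕ := ∑ i ∈ Finset.range n, f i * (n - i)

theorem weight_add_single (f : ℕ → ℕ) (c : ℕ) {n i : ℕ} (hi : i < n) :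
    weight n (f + Pi.single i c) = weight n f + c * (n - i) := by
  simp only [weight, Pi.add_apply, add_mul, Finset.sum_add_distrib, Pi.single_apply, ite_mul,
    zero_mul, Finset.sum_ite_eq', Finset.mem_range, hi, if_true]

theorem weight_lt_weight {n : ℕ} (hn : 0 < n) {f g : ℕ → ℕ} (hfg : ∀ i < n, f i < g i) :
    weight n f < weight n g :=
  Finset.sum_lt_sum_of_nonempty (Finset.nonempty_range_iff.2 hn.ne') fun i hi =>
    have hin := Finset.mem_range.1 hi
    Nat.mul_lt_mul_of_pos_right (hfg i hin) (Nat.sub_pos_of_lt hin)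

end Weight

section Dominance

variable {n : ℕ} {f g : ℕ → ℕ}

theorem pcount_eq_card (n : ℕ) (f : ℕ → ℕ) (K : ℕ) :
    pcount n f K = ((Finset.range n).filter fun i => f i < K).card := rfl

theorem pcount_le_pcount (hfg : ∀ i < n, f i ≤ g i) (K : ℕ) : pcount n g K ≤ pcount n f K := by
  simp only [pcount_eq_card]
  refine Finset.card_le_card fun i hi => ?_
  simp only [Finset.mem_filter, Finset.mem_range] at hi ⊢
  exact ⟨hi.1, (hfg i hi.1).trans_lt hi.2⟩

theorem pcount_lt_pcount (hfg : ∀ i < n, f i ≤ g i) {i : ℕ} (hi : i < n) (hlt : f i < g i) :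
    pcount n g (f i + 1) < pcount n f (f i + 1) := by
  simp only [pcount_eq_card]
  refine Finset.card_lt_card (Finset.ssubset_iff_of_subset (fun m hm => ?_) |>.2 ⟨i, ?_, ?_⟩)
  · simp only [Finset.mem_filter, Finset.mem_range] at hm ⊢
    exact ⟨hm.1, (hfg m hm.1).trans_lt hm.2⟩
  · simp [hi]
  · simp [hlt]

theorem DomGT.of_le {lam mu : ℕ → ℕ} (hd : DomGT n lam mu) (hf : ∀ i < n, f i ≤ lam i) :
    DomGT n f mu := by
  obtain ⟨hcount, i, hi, hne⟩ := hd
  refine ⟨fun K => (hcount K).trans (pcount_le_pcount hf K), ?_⟩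
  by_contra! hfmu
  have hmu : ∀ m < n, mu m ≤ lam m := fun m hm => hfmu m hm ▸ hf m hm
  exact (pcount_lt_pcount hmu hi ((hmu i hi).lt_of_ne hne.symm)).not_ge (hcount _)

end Dominance

section Generators

variable {k : Type*} [Field k] {l n : ℕ}

theorem commute_y (i j : ℕ) : Commute (y k l n i) (y k l n j) := by
  simpa only [y, commute_iff_eq, map_mul] using
    RingQuot.mkAlgHom_rel k (Rel.yy (k := k) (l := l) (n := n) i j)

theorem commute_psi_y {i j : ℕ} (hij : i ≠ j) (hij' : i ≠ j + 1) :
    Commute (psi k l n j) (y k l n i) := by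
  simpa only [y, psi, commute_iff_eq, map_mul] using
    (RingQuot.mkAlgHom_rel k (Rel.ypsi (k := k) (l := l) (n := n) i j hij hij')).symm

theorem y_mul_psi_self {i : ℕ} (hi : i + 1 < n) :
    y k l n i * psi k l n i = psi k l n i * y k l n (i + 1) + 1 := by
  simpa only [y, psi, map_mul, map_add, map_one] using
    RingQuot.mkAlgHom_rel k (Rel.yp (k := k) (l := l) (n := n) i hi)

theorem psi_mul_y_self {i : ℕ} (hi : i + 1 < n) :
    psi k l n i * y k l n i = y k l n (i + 1) * psi k l n i + 1 := by
  simpa only [y, psi, map_mul, map_add, map_one] using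
    RingQuot.mkAlgHom_rel k (Rel.py (k := k) (l := l) (n := n) i hi)

theorem psi_mul_self (i : ℕ) : psi k l n i * psi k l n i = 0 := by
  simpa only [psi, map_mul, map_zero] using
    RingQuot.mkAlgHom_rel k (Rel.psisq (k := k) (l := l) (n := n) i)

theorem y_zero_pow : y k l n 0 ^ l = 0 := by
  simpa only [y, map_pow, map_zero] using
    RingQuot.mkAlgHom_rel k (Rel.cyc (k := k) (l := l) (n := n))

theorem y_eq_zero {i : ℕ} (hi : n ≤ i) : y k l n i = 0 := by
  simpa only [y, map_zero] using
    RingQuot.mkAlgHom_rel k (Rel.ybound (k := k) (l := l) (n := n) i hi)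

theorem psi_eq_zero {i : ℕ} (hi : n ≤ i + 1) : psi k l n i = 0 := by
  simpa only [psi, map_zero] using
    RingQuot.mkAlgHom_rel k (Rel.pbound (k := k) (l := l) (n := n) i hi)

theorem y_pow_eq_zero {i : ℕ} (hi : i < n) : y k l n i ^ l = 0 := by
  induction i with
  | zero => exact y_zero_pow
  | succ i ih =>
    exact pow_eq_zero_of_pow_eq_zero (psi_mul_y_self hi) (y_mul_psi_self hi) (psi_mul_self i)
      (commute_y i (i + 1)) (ih (by omega))

theorem exists_y_mul_psi_eq (m i : ℕ) : ∃ c : k, y k l n m * psi k l n i =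
    psi k l n i * y k l n (Equiv.swap i (i + 1) m) + algebraMap k _ c := by
  rcases le_or_gt n (i + 1) with hi | hi
  · exact ⟨0, by simp [psi_eq_zero hi]⟩
  rcases eq_or_ne m i with rfl | hmi
  · exact ⟨1, by simp [y_mul_psi_self hi]⟩
  rcases eq_or_ne m (i + 1) with rfl | hmi'
  · exact ⟨-1, by simp [psi_mul_y_self hi]⟩
  · exact ⟨0, by simp [Equiv.swap_apply_of_ne_of_ne hmi hmi', (commute_psi_y hmi hmi').eq]⟩

theorem adjoin_y_psi_eq_top :
    Algebra.adjoin k (Set.range (y k l n) ∪ Set.range (psi k l n)) = ⊤ := by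
  have hrange : Set.range (y k l n) ∪ Set.range (psi k l n) =
      RingQuot.mkAlgHom k (Rel k l n) '' Set.range (FreeAlgebra.ι k) := by
    rw [← Set.range_comp, ← Set.Sum.elim_range]
    congr 1
    ext (i | i) <;> rfl
  rw [hrange, ← AlgHom.map_adjoin, FreeAlgebra.adjoin_range_ι, Algebra.map_top,
    AlgHom.range_eq_top]
  exact RingQuot.mkAlgHom_surjective k _

end Generators

section Monomials

variable {k : Type*} [Field k] {l n : ℕ}

variable (k l n) in
/-- The monomial `y_0^{f 0} ⋯ y_{n-1}^{f (n-1)}`; the values of `f` from `n` on play no role. -/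
def yMonomial (f : ℕ → ℕ) : NHc k l n := ((List.range n).map fun i => y k l n i ^ f i).prod

theorem yLam_eq_yMonomial (j : ℕ → ℕ) :
    yLam k l n j = yMonomial k l n fun i => l - 1 - j i := rfl

theorem yMonomial_congr {f g : ℕ → ℕ} (hfg : ∀ i < n, f i = g i) :
    yMonomial k l n f = yMonomial k l n g :=
  congrArg List.prod <| List.map_congr_left fun i hi => by rw [hfg i (List.mem_range.1 hi)]

theorem yMonomial_add_single (f : ℕ → ℕ) {i : ℕ} (hi : i < n) (c : ℕ) :
    yMonomial k l n (f + Pi.single i c) = yMonomial k l n f * y k l n i ^ c :=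
  prod_range_pow_add_single commute_y f c hi

theorem yMonomial_mem_closure (f : ℕ → ℕ) :
    yMonomial k l n f ∈ Submonoid.closure (Set.range (y k l n)) := by
  refine Submonoid.list_prod_mem _ fun x (hx : x ∈ List.map _ _) => ?_
  obtain ⟨i, -, rfl⟩ := List.mem_map.1 hx
  exact pow_mem (Submonoid.subset_closure (Set.mem_range_self i)) _

theorem commute_yMonomial {x : NHc k l n} {f : ℕ → ℕ}
    (hx : ∀ i < n, Commute x (y k l n i ^ f i)) : Commute x (yMonomial k l n f) := by
  refine Commute.list_prod_right _ _ fun z hz => ?_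
  obtain ⟨i, hi, rfl⟩ := List.mem_map.1 hz
  exact hx i (List.mem_range.1 hi)

theorem commute_y_yMonomial (i : ℕ) (f : ℕ → ℕ) : Commute (y k l n i) (yMonomial k l n f) :=
  commute_yMonomial fun j _ => (commute_y i j).pow_right (f j)

theorem yMonomial_eq_zero {f : ℕ → ℕ} {i : ℕ} (hi : i < n) (hf : l ≤ f i) :
    yMonomial k l n f = 0 := by
  have hsplit : f = Function.update f i (f i - l) + Pi.single i l := by
    ext m
    rcases eq_or_ne m i with rfl | hm <;> simp [*]
  rw [hsplit, yMonomial_add_single _ hi, y_pow_eq_zero hi, mul_zero]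

theorem commute_psi_yMonomial {f : ℕ → ℕ} {i : ℕ} (hi : i + 1 < n) (hf : f i = f (i + 1)) :
    Commute (psi k l n i) (yMonomial k l n f) := by
  set g := Function.update (Function.update f i 0) (i + 1) 0 with hg
  have hsplit : f = g + Pi.single i (f i) + Pi.single (i + 1) (f i) := by
    ext m
    rcases eq_or_ne m i with rfl | hm
    · simp [hg]
    · rcases eq_or_ne m (i + 1) with rfl | hm' <;> simp [*]
  have hrest : Commute (psi k l n i) (yMonomial k l n g) := by
    refine commute_yMonomial fun m _ => ?_
    by_cases hm : m = i ∨ m = i + 1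
    · have hgm : g m = 0 := by rcases hm with rfl | rfl <;> simp [hg]
      exact hgm ▸ pow_zero (y k l n m) ▸ Commute.one_right _
    · push Not at hm
      exact (commute_psi_y hm.1 hm.2).pow_right _
  have hsymm : Commute (psi k l n i) (y k l n i * y k l n (i + 1)) :=
    commute_mul_of_mul_eq (psi_mul_y_self hi) (y_mul_psi_self hi) (commute_y i (i + 1))
  rw [hsplit, yMonomial_add_single _ hi, yMonomial_add_single _ (by omega), mul_assoc,
    ← (commute_y i (i + 1)).mul_pow]
  exact hrest.mul_right (hsymm.pow_right _)

theorem yMonomial_mem_of_straightening (S : AddSubgroup (NHc k l n)) {f : ℕ → ℕ} {i : ℕ}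
    (hi : i + 1 < n) (hf : f i ≤ f (i + 1))
    (hleft : ∀ x ∈ S, psi k l n i * x ∈ S) (hright : ∀ x ∈ S, x * psi k l n i ∈ S)
    (hS : ∀ g : ℕ → ℕ, weight n f < weight n g → f i ≤ g i → f i ≤ g (i + 1) →
      (∀ m, m ≠ i → m ≠ i + 1 → g m = f m) → yMonomial k l n g ∈ S) :
    yMonomial k l n f ∈ S := by
  set d := f (i + 1) - f i with hd
  set g := Function.update f (i + 1) (f i) with hg
  have hgi : g i = f i := by simp [hg]
  have hgi' : g (i + 1) = f i := by simp [hg]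
  have hsplit : f = g + Pi.single (i + 1) d := by
    ext m
    rcases eq_or_ne m (i + 1) with rfl | hm
    · simp [hg, hd, hf]
    · simp [hg, hm]
  rw [hsplit, yMonomial_add_single g hi]
  refine mul_pow_mem_of_divided_difference S (psi_mul_y_self hi) (commute_y i (i + 1))
    (commute_psi_yMonomial hi (hgi.trans hgi'.symm)) hleft hright fun a b hab hpos => ?_
  rw [← yMonomial_add_single g (by omega), ← yMonomial_add_single _ hi]
  refine hS _ ?_ (by simp [hgi]) (by simp [hgi']) fun m hm hm' => by simp [hg, hm, hm']
  rw [hsplit, weight_add_single _ _ hi, weight_add_single _ _ hi, weight_add_single _ _ (by omega)]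
  obtain ⟨w, hw⟩ : ∃ w, n - (i + 1) = w + 1 := ⟨n - (i + 1) - 1, by omega⟩
  rw [hw, show n - i = w + 2 by omega]
  have hmul : d * w ≤ (a + b) * w := Nat.mul_le_mul_right w hab
  grind

end Monomials

section CellIdeal

variable {k : Type*} [Field k] {l n : ℕ} {lam mu : ℕ → ℕ}

theorem cellIdeal_le {S : Submodule k (NHc k l n)}
    (hS : ∀ lam, IsPos l n lam → DomGT n lam mu → ∀ a b,
      psiList k l n a * yLam k l n lam * psiList k l n b ∈ S) : cellIdeal k l n mu ≤ S := by
  refine Submodule.span_le.2 ?_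
  rintro _ ⟨lam, hlam, hdom, a, b, rfl⟩
  exact hS lam hlam hdom a b

theorem psiList_mul_yLam_mul_psiList_mem (hlam : IsPos l n lam) (hdom : DomGT n lam mu)
    (a b : List ℕ) : psiList k l n a * yLam k l n lam * psiList k l n b ∈ cellIdeal k l n mu :=
  Submodule.subset_span ⟨lam, hlam, hdom, a, b, rfl⟩

theorem psiList_cons (i : ℕ) (a : List ℕ) :
    psiList k l n (i :: a) = psi k l n i * psiList k l n a := List.prod_cons

theorem psiList_append_singleton (a : List ℕ) (i : ℕ) :
    psiList k l n (a ++ [i]) = psiList k l n a * psi k l n i := by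
  simp [psiList]

theorem psi_mul_mem_cellIdeal (i : ℕ) {x : NHc k l n} (hx : x ∈ cellIdeal k l n mu) :
    psi k l n i * x ∈ cellIdeal k l n mu := by
  suffices h : cellIdeal k l n mu ≤
      (cellIdeal k l n mu).comap (LinearMap.mulLeft k (psi k l n i)) from h hx
  refine cellIdeal_le fun lam hlam hdom a b => ?_
  simpa only [Submodule.mem_comap, LinearMap.mulLeft_apply, psiList_cons, mul_assoc] using
    psiList_mul_yLam_mul_psiList_mem hlam hdom (i :: a) b

theorem mul_psi_mem_cellIdeal (i : ℕ) {x : NHc k l n} (hx : x ∈ cellIdeal k l n mu) :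
    x * psi k l n i ∈ cellIdeal k l n mu := by
  suffices h : cellIdeal k l n mu ≤
      (cellIdeal k l n mu).comap (LinearMap.mulRight k (psi k l n i)) from h hx
  refine cellIdeal_le fun lam hlam hdom a b => ?_
  simpa only [Submodule.mem_comap, LinearMap.mulRight_apply, psiList_append_singleton, mul_assoc]
    using psiList_mul_yLam_mul_psiList_mem hlam hdom a (b ++ [i])

theorem psiList_mul_mem_cellIdeal (a : List ℕ) {x : NHc k l n} (hx : x ∈ cellIdeal k l n mu) :
    psiList k l n a * x ∈ cellIdeal k l n mu := by
  induction a with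
  | nil => simpa [psiList] using hx
  | cons i a ih =>
    rw [psiList_cons, mul_assoc]
    exact psi_mul_mem_cellIdeal i ih

theorem mul_psiList_mem_cellIdeal (a : List ℕ) {x : NHc k l n} (hx : x ∈ cellIdeal k l n mu) :
    x * psiList k l n a ∈ cellIdeal k l n mu := by
  induction a using List.reverseRecOn with
  | nil => simpa [psiList] using hx
  | append_singleton a i ih =>
    rw [psiList_append_singleton, ← mul_assoc]
    exact mul_psi_mem_cellIdeal i ih

theorem yMonomial_mem_cellIdeal_of_strictAntiOn (hlam : IsPos l n lam) (hdom : DomGT n lam mu)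
    {f : ℕ → ℕ} (hf : ∀ m < n, l - 1 - lam m ≤ f m) (hanti : StrictAntiOn f (Set.Iio n))
    (hlt : ∀ m < n, f m < l) : yMonomial k l n f ∈ cellIdeal k l n mu := by
  set nu : ℕ → ℕ := fun m => l - 1 - f m with hnu
  have hnu_pos : IsPos l n nu := by
    refine ⟨fun a b hab hb => ?_, fun a ha => ?_⟩
    · have := hanti (hab.trans hb) hb hab
      have := hlt a (hab.trans hb)
      simp only [hnu]
      omega
    · have := hlt a ha
      simp only [hnu]
      omega
  have hnu_dom : DomGT n nu mu := hdom.of_le fun m hm => by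
    have := hf m hm
    have := hlam.2 m hm
    simp only [hnu]
    omega
  have hf_eq : yMonomial k l n f = yLam k l n nu := yMonomial_congr fun m hm => by
    have := hlt m hm
    simp only [hnu]
    omega
  rw [hf_eq]
  simpa [psiList] using psiList_mul_yLam_mul_psiList_mem hnu_pos hnu_dom [] []

theorem yMonomial_mem_cellIdeal (hlam : IsPos l n lam) (hdom : DomGT n lam mu) (f : ℕ → ℕ)
    (hf : ∀ m < n, l - 1 - lam m ≤ f m) : yMonomial k l n f ∈ cellIdeal k l n mu := by
  by_contra hmem
  have hlt : ∀ m < n, f m < l := fun m hm => by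
    by_contra! hle
    exact hmem (yMonomial_eq_zero (k := k) hm hle ▸ zero_mem _)
  have hdescent : ∀ i, i + 1 < n → f (i + 1) < f i := fun i hi => by
    by_contra! hle
    refine hmem (yMonomial_mem_of_straightening (cellIdeal k l n mu).toAddSubgroup hi hle
      (fun x => psi_mul_mem_cellIdeal i) (fun x => mul_psi_mem_cellIdeal i)
      fun g _ hgi hgi' hg => yMonomial_mem_cellIdeal hlam hdom g fun m hm => ?_)
    have hlam_lt : lam i < lam (i + 1) := hlam.1 i (i + 1) i.lt_succ_self hi
    have hfi := hf i (by omega)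
    rcases eq_or_ne m i with rfl | hmi
    · exact hfi.trans hgi
    rcases eq_or_ne m (i + 1) with rfl | hmi'
    · omega
    · exact hg m hmi hmi' ▸ hf m hm
  have hanti : StrictAntiOn f (Set.Iio n) :=
    strictAntiOn_of_succ_lt Set.ordConnected_Iio fun i _ _ hi => hdescent i hi
  exact hmem (yMonomial_mem_cellIdeal_of_strictAntiOn hlam hdom hf hanti hlt)
termination_by weight n (fun _ => l) - weight n f
decreasing_by
  exact Nat.sub_lt_sub_left (weight_lt_weight (by omega) hlt) ‹weight n f < weight n g›

theorem yLam_mem_cellIdeal (hlam : IsPos l n lam) (hdom : DomGT n lam mu) :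
    yLam k l n lam ∈ cellIdeal k l n mu :=
  yMonomial_mem_cellIdeal hlam hdom _ fun _ _ => le_rfl

theorem yLam_mul_y_mem_cellIdeal (hlam : IsPos l n lam) (hdom : DomGT n lam mu) (i : ℕ) :
    yLam k l n lam * y k l n i ∈ cellIdeal k l n mu := by
  rcases lt_or_ge i n with hi | hi
  · rw [yLam_eq_yMonomial, ← pow_one (y k l n i), ← yMonomial_add_single _ hi]
    exact yMonomial_mem_cellIdeal hlam hdom _ fun m _ => Nat.le_add_right _ _
  · rw [y_eq_zero hi, mul_zero]
    exact zero_mem _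

theorem y_mul_psiList_mul_mem_cellIdeal {x : NHc k l n} (hx : x ∈ cellIdeal k l n mu)
    (hyx : ∀ m, y k l n m * x ∈ cellIdeal k l n mu) (a : List ℕ) (m : ℕ) :
    y k l n m * (psiList k l n a * x) ∈ cellIdeal k l n mu := by
  induction a generalizing m with
  | nil => simpa [psiList] using hyx m
  | cons i a ih =>
    obtain ⟨c, hc⟩ := exists_y_mul_psi_eq (k := k) (l := l) (n := n) m i
    rw [psiList_cons, mul_assoc, ← mul_assoc, hc, add_mul, mul_assoc, ← Algebra.smul_def]
    exact add_mem (psi_mul_mem_cellIdeal i (ih _))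
      (Submodule.smul_mem _ c (psiList_mul_mem_cellIdeal a hx))

theorem mul_psiList_mul_y_mem_cellIdeal {x : NHc k l n} (hx : x ∈ cellIdeal k l n mu)
    (hxy : ∀ m, x * y k l n m ∈ cellIdeal k l n mu) (a : List ℕ) (m : ℕ) :
    x * psiList k l n a * y k l n m ∈ cellIdeal k l n mu := by
  induction a using List.reverseRecOn generalizing m with
  | nil => simpa [psiList] using hxy m
  | append_singleton a i ih =>
    obtain ⟨c, hc⟩ :=
      exists_y_mul_psi_eq (k := k) (l := l) (n := n) (Equiv.swap i (i + 1) m) i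
    rw [Equiv.swap_apply_self] at hc
    rw [psiList_append_singleton, ← mul_assoc, mul_assoc, eq_sub_of_add_eq hc.symm, mul_sub,
      ← mul_assoc, ← Algebra.commutes, ← Algebra.smul_def]
    exact sub_mem (mul_psi_mem_cellIdeal i (ih _))
      (Submodule.smul_mem _ c (mul_psiList_mem_cellIdeal a hx))

theorem y_mul_mem_cellIdeal (i : ℕ) {x : NHc k l n} (hx : x ∈ cellIdeal k l n mu) :
    y k l n i * x ∈ cellIdeal k l n mu := by
  suffices h : cellIdeal k l n mu ≤
      (cellIdeal k l n mu).comap (LinearMap.mulLeft k (y k l n i)) from h hx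
  refine cellIdeal_le fun lam hlam hdom a b => ?_
  rw [Submodule.mem_comap, LinearMap.mulLeft_apply, ← mul_assoc]
  refine mul_psiList_mem_cellIdeal b (y_mul_psiList_mul_mem_cellIdeal
    (yLam_mem_cellIdeal hlam hdom) (fun m => ?_) a i)
  rw [yLam_eq_yMonomial, (commute_y_yMonomial m _).eq]
  exact yLam_mul_y_mem_cellIdeal hlam hdom m

theorem mul_y_mem_cellIdeal (i : ℕ) {x : NHc k l n} (hx : x ∈ cellIdeal k l n mu) :
    x * y k l n i ∈ cellIdeal k l n mu := by
  suffices h : cellIdeal k l n mu ≤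
      (cellIdeal k l n mu).comap (LinearMap.mulRight k (y k l n i)) from h hx
  refine cellIdeal_le fun lam hlam hdom a b => ?_
  rw [Submodule.mem_comap, LinearMap.mulRight_apply, mul_assoc, mul_assoc,
    ← mul_assoc (yLam _ _ _ _)]
  exact psiList_mul_mem_cellIdeal a (mul_psiList_mul_y_mem_cellIdeal
    (yLam_mem_cellIdeal hlam hdom) (yLam_mul_y_mem_cellIdeal hlam hdom) b i)

theorem mul_mem_cellIdeal_left (a : NHc k l n) {x : NHc k l n} (hx : x ∈ cellIdeal k l n mu) :
    a * x ∈ cellIdeal k l n mu := by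
  refine mul_mem_of_adjoin_eq_top_left adjoin_y_psi_eq_top ?_ a hx
  rintro _ (⟨i, rfl⟩ | ⟨i, rfl⟩) z hz
  · exact y_mul_mem_cellIdeal i hz
  · exact psi_mul_mem_cellIdeal i hz

theorem mul_mem_cellIdeal_right (a : NHc k l n) {x : NHc k l n} (hx : x ∈ cellIdeal k l n mu) :
    x * a ∈ cellIdeal k l n mu := by
  refine mul_mem_of_adjoin_eq_top_right adjoin_y_psi_eq_top ?_ a hx
  rintro _ (⟨i, rfl⟩ | ⟨i, rfl⟩) z hz
  · exact mul_y_mem_cellIdeal i hz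
  · exact mul_psi_mem_cellIdeal i hz

end CellIdeal

end Stmt17

open Stmt17 in
theorem stmt_17_general {k : Type*} [Field k] {l n : ℕ} (mu : ℕ → ℕ)
    (D : NHc k l n →ₗ[k] NHc k l n)
    (hLeib : ∀ a b : NHc k l n, D (a * b) = D a * b + a * D b)
    (hy : ∀ i : ℕ, ∃ g ∈ (Set.range (y k l n)).centralizer, D (y k l n i) = y k l n i * g) :
    ∀ x ∈ cellIdeal k l n mu, D x ∈ cellIdeal k l n mu := by
  suffices h : cellIdeal k l n mu ≤ (cellIdeal k l n mu).comap D from h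
  refine cellIdeal_le fun lam hlam hdom a b => ?_
  have hmem := yLam_mem_cellIdeal (k := k) hlam hdom
  obtain ⟨g, -, hDlam⟩ : ∃ g ∈ (Set.range (y k l n)).centralizer,
      D (yLam k l n lam) = yLam k l n lam * g :=
    exists_map_eq_mul_of_mem_closure hLeib (Set.forall_mem_range.2 hy) (yMonomial_mem_closure _)
  rw [Submodule.mem_comap, hLeib, hLeib, hDlam]
  exact add_mem
    (mul_mem_cellIdeal_right _ (add_mem (mul_mem_cellIdeal_left _ hmem)
      (mul_mem_cellIdeal_left _ (mul_mem_cellIdeal_right g hmem))))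
    (mul_mem_cellIdeal_right _ (mul_mem_cellIdeal_left _ hmem))

open Stmt17 in
/-- Let `l ≥ n ≥ 0` and let `μ ∈ P_n^l` be a partition.  Then the
derivation `∂` of the cyclotomic nilHecke algebra `NH_n^l` (with `∂(y i) = (y i)²` and
`∂(ψ i) = −(y i)(ψ i) − (ψ i)(y (i+1))`) preserves the two-sided ideal `(NH_n^l)^{>μ}`
spanned by the cellular basis elements `ψ_h^* y^λ ψ_t` over all partitions `λ > μ` in the
dominance order and tableaux `h, t` of shape `λ`. -/
theorem stmt_17 (k : Type*) [Field k] (p : ℕ) [Fact p.Prime] [CharP k p]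
    (l n : ℕ) (hln : n ≤ l) (mu : ℕ → ℕ) (hmu : IsPos l n mu)
    (D : NHc k l n →ₗ[k] NHc k l n)
    (hLeib : ∀ a b : NHc k l n, D (a * b) = D a * b + a * D b)
    (hy : ∀ i : ℕ, D (y k l n i) = y k l n i * y k l n i)
    (hpsi : ∀ i : ℕ, D (psi k l n i) =
      -(y k l n i * psi k l n i) - psi k l n i * y k l n (i+1)) :
    ∀ x ∈ cellIdeal k l n mu, D x ∈ cellIdeal k l n mu :=
  stmt_17_general mu D hLeib fun i =>
    ⟨y k l n i, Set.forall_mem_range.2 fun j => commute_y j i, hy i⟩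
end
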